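/- arXiv:0909.2264 — 14 statements merged into one kernel-verified Lean document; each statement's English description precedes it below -/
import Mathlib

section
/- Let M be a finite matroid of rank r on ground set E. For all assignments of commuting variables x = (x_e)_{e∈E}, y = (y_e)_{e∈E} and λ, ξ (equivalently, for all elements of any commutative ring), SC(M; (x_e·y_e)_{e∈E}, λ·ξ) = ∑_{T ⊆ E} λ^{r − rk(T)} · (∏_{e∈T} (−y_e)) · SC(M|T; (−x_e)_{e∈T}, λ) · SC(M/T; (y_e)_{e∈E∖T}, ξ). -/
open Finset

/-- A finite matroid on ground set `E`, given by its rank function on finsets,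
satisfying the standard rank axioms: the rank of a set is at most its cardinality,
rank is monotone, and rank is submodular. -/
structure FinMatroid (α : Type*) [DecidableEq α] where
  E : Finset α
  rk : Finset α → ℕ
  rk_le_card : ∀ A ⊆ E, rk A ≤ A.card
  rk_mono : ∀ ⦃A B : Finset α⦄, A ⊆ B → B ⊆ E → rk A ≤ rk B
  rk_submod : ∀ ⦃A B : Finset α⦄, A ⊆ E → B ⊆ E →
    rk (A ∪ B) + rk (A ∩ B) ≤ rk A + rk B

/-- The multivariate subset-corank polynomial of the matroid-like data given by
ground set `G`, rank function `f`, and normalizing rank `s`: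
`SC = ∑_{A ⊆ G} (∏_{e ∈ A} x e) * l ^ (s - f A)`. -/
def SC {α R : Type*} [DecidableEq α] [CommRing R] (G : Finset α) (f : Finset α → ℕ)
    (s : ℕ) (x : α → R) (l : R) : R :=
  ∑ A ∈ G.powerset, (∏ e ∈ A, x e) * l ^ (s - f A)

theorem sum_powerset_sdiff_aux {α R : Type*} [DecidableEq α] [CommRing R]
    {T E : Finset α} (h : T ⊆ E) (g : Finset α → R) :
    ∑ A ∈ (E \ T).powerset, g (A ∪ T) = ∑ C ∈ E.powerset with T ⊆ C, g C := by
  refine Finset.sum_bij' (fun A _ => A ∪ T) (fun C _ => C \ T) ?_ ?_ ?_ ?_ ?_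
  · intro A hA
    simp only [mem_powerset, mem_filter] at *
    exact ⟨union_subset (hA.trans sdiff_subset) h, subset_union_right⟩
  · intro C hC
    simp only [mem_powerset, mem_filter] at *
    exact sdiff_subset_sdiff hC.1 subset_rfl
  · intro A hA
    simp only [mem_powerset] at hA
    ext e
    have := @hA e
    simp only [mem_sdiff, mem_union] at *
    tauto
  · intro C hC
    simp only [mem_powerset, mem_filter] at hC
    exact sdiff_union_of_subset hC.2
  · intro A hA
    rfl

theorem sum_interval_aux {α R : Type*} [DecidableEq α] [CommRing R]
    (B C : Finset α) (h : B ⊆ C) :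
    ∑ T ∈ C.powerset with B ⊆ T, (-1 : R) ^ T.card * (-1) ^ B.card =
      if B = C then 1 else 0 := by
  rw [← sum_powerset_sdiff_aux h (fun T => (-1 : R) ^ T.card * (-1) ^ B.card)]
  have h1 : ∀ A ∈ (C \ B).powerset,
      (-1 : R) ^ (A ∪ B).card * (-1) ^ B.card = (((-1 : ℤ) ^ A.card : ℤ) : R) := by
    intro A hA
    have hd : Disjoint A B :=
      Disjoint.mono_left (mem_powerset.1 hA) sdiff_disjoint
    rw [card_union_of_disjoint hd, pow_add, mul_assoc, ← mul_pow]
    simp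
  rw [sum_congr rfl h1, ← Int.cast_sum, sum_powerset_neg_one_pow_card]
  have : C \ B = ∅ ↔ B = C := by
    rw [sdiff_eq_empty_iff_subset]
    exact ⟨fun h' => subset_antisymm h h', fun h' => h' ▸ subset_rfl⟩
  simp [this]

/-- Identity 1: the convolution-multiplication identity for the multivariate
subset-corank polynomial.  Here `M|T` is encoded by ground set `T` with the same rank
function and rank `rk T`, and `M/T` by ground set `E \ T` with rank function
`A ↦ rk (A ∪ T) - rk T` and rank `rk E - rk T`. -/
theorem subset_corank_convolution {α R : Type*} [DecidableEq α] [CommRing R]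
    (M : FinMatroid α) (x y : α → R) (l ξ : R) :
    SC M.E M.rk (M.rk M.E) (fun e => x e * y e) (l * ξ) =
      ∑ T ∈ M.E.powerset,
        l ^ (M.rk M.E - M.rk T) * (∏ e ∈ T, (-y e)) *
          SC T M.rk (M.rk T) (fun e => -x e) l *
          SC (M.E \ T) (fun A => M.rk (A ∪ T) - M.rk T) (M.rk M.E - M.rk T) y ξ := by
  set E := M.E with hE
  set r := M.rk E with hr
  have key : ∀ T ∈ E.powerset,
      l ^ (r - M.rk T) * (∏ e ∈ T, (-y e)) * SC T M.rk (M.rk T) (fun e => -x e) l *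
          SC (E \ T) (fun A => M.rk (A ∪ T) - M.rk T) (r - M.rk T) y ξ =
      ∑ B ∈ T.powerset, ∑ C ∈ E.powerset with T ⊆ C,
        ((-1 : R) ^ T.card * (-1) ^ B.card) *
          ((∏ e ∈ B, x e) * l ^ (r - M.rk B) * ((∏ e ∈ C, y e) * ξ ^ (r - M.rk C))) := by
    intro T hT
    rw [mem_powerset] at hT
    have hTr : M.rk T ≤ r := M.rk_mono hT subset_rfl
    unfold SC
    dsimp only
    rw [mul_sum T.powerset, sum_mul]
    refine sum_congr rfl fun B hB => ?_
    rw [mem_powerset] at hB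
    have hBT : M.rk B ≤ M.rk T := M.rk_mono hB hT
    rw [← sum_powerset_sdiff_aux hT (fun C => ((-1 : R) ^ T.card * (-1) ^ B.card) *
          ((∏ e ∈ B, x e) * l ^ (r - M.rk B) * ((∏ e ∈ C, y e) * ξ ^ (r - M.rk C)))), mul_sum]
    refine sum_congr rfl fun A hA => ?_
    rw [mem_powerset] at hA
    have hd : Disjoint A T := Disjoint.mono_left hA sdiff_disjoint
    have hAT : M.rk T ≤ M.rk (A ∪ T) :=
      M.rk_mono subset_union_right (union_subset (hA.trans sdiff_subset) hT)
    have e1 : r - M.rk T - (M.rk (A ∪ T) - M.rk T) = r - M.rk (A ∪ T) := by omega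
    have e2 : r - M.rk B = (r - M.rk T) + (M.rk T - M.rk B) := by omega
    rw [e1, e2, pow_add, prod_union hd, prod_neg, prod_neg]
    ring
  rw [sum_congr rfl key]
  rw [sum_comm' (t' := E.powerset) (s' := fun B => E.powerset.filter (fun T => B ⊆ T))
    (by
      intro T B
      simp only [mem_powerset, mem_filter]
      exact ⟨fun h => ⟨⟨h.1, h.2⟩, h.2.trans h.1⟩, fun h => h.1⟩)]
  unfold SC
  refine sum_congr rfl fun B hB => ?_
  rw [sum_comm' (t' := E.powerset.filter (fun C => B ⊆ C))
    (s' := fun C => C.powerset.filter (fun T => B ⊆ T))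
    (by
      intro T C
      simp only [mem_powerset, mem_filter]
      exact ⟨fun h => ⟨⟨h.2.2, h.1.2⟩, h.2.1, h.1.2.trans h.2.2⟩,
        fun h => ⟨⟨h.1.1.trans h.2.1, h.1.2⟩, h.2.1, h.1.1⟩⟩)]
  have h2 : ∀ C ∈ E.powerset.filter (fun C => B ⊆ C),
      ∑ T ∈ C.powerset with B ⊆ T, ((-1 : R) ^ T.card * (-1) ^ B.card) *
          ((∏ e ∈ B, x e) * l ^ (r - M.rk B) * ((∏ e ∈ C, y e) * ξ ^ (r - M.rk C))) =
      if B = C then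
        ((∏ e ∈ B, x e) * l ^ (r - M.rk B) * ((∏ e ∈ C, y e) * ξ ^ (r - M.rk C))) else 0 := by
    intro C hC
    rw [← sum_mul, sum_interval_aux B C (mem_filter.1 hC).2]
    split_ifs <;> simp
  rw [sum_congr rfl h2, sum_ite_eq, if_pos (mem_filter.2 ⟨hB, subset_rfl⟩), prod_mul_distrib,
    mul_pow]
  ring
end

section
/- Let M be a finite matroid of rank r on ground set E. For all commuting variables x, y, λ, ξ (equivalently, for all elements of any commutative ring), R(M; x·y, λ·ξ) = ∑_{T ⊆ E} λ^{r − rk(T)} · (−y)^{|T| − rk(T)} · R(M|T; −x, −λ) · R(M/T; y, ξ). -/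
open Finset

/-- The nullity-corank (rank generating) polynomial of the matroid-like data given by
ground set `G`, rank function `f`, and normalizing rank `s`:
`R = ∑_{A ⊆ G} x ^ (|A| - f A) * l ^ (s - f A)`. -/
def RG {α R : Type*} [DecidableEq α] [CommRing R] (G : Finset α) (f : Finset α → ℕ)
    (s : ℕ) (x l : R) : R :=
  ∑ A ∈ G.powerset, x ^ (A.card - f A) * l ^ (s - f A)

lemma alt_sum_Icc {α R : Type*} [DecidableEq α] [CommRing R] (A B : Finset α) (h : A ⊆ B) :
    ∑ T ∈ Finset.Icc A B, (-1 : R) ^ (T.card + A.card) = if A = B then 1 else 0 := by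
  have hd : ∀ C ∈ (B \ A).powerset, Disjoint A C := fun C hC =>
    Finset.disjoint_of_subset_right (Finset.mem_powerset.1 hC) Finset.disjoint_sdiff
  rw [Finset.Icc_eq_image_powerset h, Finset.sum_image]
  · have h1 : ∀ C ∈ (B \ A).powerset,
        (-1 : R) ^ ((A ∪ C).card + A.card) = (((-1 : ℤ) ^ C.card : ℤ) : R) := by
      intro C hC
      rw [Finset.card_union_of_disjoint (hd C hC)]
      push_cast
      rw [show A.card + C.card + A.card = 2 * A.card + C.card by ring, pow_add, pow_mul]
      simp
    rw [Finset.sum_congr rfl h1, ← Int.cast_sum, Finset.sum_powerset_neg_one_pow_card]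
    have : B \ A = ∅ ↔ A = B := by
      rw [Finset.sdiff_eq_empty_iff_subset]
      exact ⟨fun h' => Finset.Subset.antisymm h h', fun h' => h' ▸ Finset.Subset.refl _⟩
    by_cases hAB : A = B
    · simp [this.2 hAB, hAB]
    · rw [if_neg hAB, if_neg (fun h' => hAB (this.1 h'))]
      simp
  · intro C hC D hD hCD
    have e1 := Finset.union_sdiff_cancel_left (hd C hC)
    have e2 := Finset.union_sdiff_cancel_left (hd D hD)
    have hCD' : A ∪ C = A ∪ D := hCD
    rw [← e1, ← e2, hCD']

lemma term_eq {α R : Type*} [DecidableEq α] [CommRing R]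
    (M : FinMatroid α) (x y l ξ : R) (A T B : Finset α) (hAT : A ⊆ T) (hTB : T ⊆ B)
    (hB : B ⊆ M.E) :
    l ^ (M.rk M.E - M.rk T) * (-y) ^ (T.card - M.rk T) *
      ((-x) ^ (A.card - M.rk A) * (-l) ^ (M.rk T - M.rk A)) *
      (y ^ ((B \ T).card - (M.rk B - M.rk T)) *
        ξ ^ (M.rk M.E - M.rk T - (M.rk B - M.rk T))) =
    (x ^ (A.card - M.rk A) * l ^ (M.rk M.E - M.rk A) * y ^ (B.card - M.rk B) *
      ξ ^ (M.rk M.E - M.rk B)) * (-1) ^ (T.card + A.card) := by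
  have hT := hTB.trans hB
  have hA := hAT.trans hT
  have r1 := M.rk_mono hAT hT
  have r2 := M.rk_mono hTB hB
  have r3 := M.rk_mono hB (Finset.Subset.refl _)
  have c1 := M.rk_le_card A hA
  have c2 := M.rk_le_card T hT
  have c3 := M.rk_le_card B hB
  have hD : B \ T ⊆ M.E := Finset.sdiff_subset.trans hB
  have s1 := M.rk_submod hD hT
  rw [Finset.sdiff_union_of_subset hTB] at s1
  have c4 := M.rk_le_card _ hD
  have c5 := Finset.card_sdiff_add_card_eq_card hTB
  obtain ⟨a, ha⟩ := Nat.exists_eq_add_of_le c1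
  obtain ⟨t, ht⟩ := Nat.exists_eq_add_of_le c2
  obtain ⟨u, hu⟩ := Nat.exists_eq_add_of_le r1
  obtain ⟨v, hv⟩ := Nat.exists_eq_add_of_le r2
  obtain ⟨w, hw⟩ := Nat.exists_eq_add_of_le r3
  obtain ⟨d, hd⟩ := Nat.exists_eq_add_of_le (show v ≤ (B \ T).card by omega)
  rw [show M.rk M.E - M.rk T = v + w by omega, show T.card - M.rk T = t by omega,
    show A.card - M.rk A = a by omega, show M.rk T - M.rk A = u by omega,
    show (B \ T).card - (M.rk B - M.rk T) = d by omega,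
    show v + w - (M.rk B - M.rk T) = w by omega,
    show M.rk M.E - M.rk A = u + v + w by omega,
    show B.card - M.rk B = t + d by omega,
    show M.rk M.E - M.rk B = w by omega,
    show T.card + A.card = 2 * M.rk A + u + t + a by omega,
    neg_pow y, neg_pow x, neg_pow l, pow_add (-1 : R), pow_add (-1 : R), pow_add (-1 : R),
    pow_mul]
  simp only [neg_one_sq, one_pow]
  ring

/-- Identity 3: the convolution-multiplication identity for the nullity-corank
(rank generating) polynomial. -/
theorem rank_generating_convolution {α R : Type*} [DecidableEq α] [CommRing R]
    (M : FinMatroid α) (x y l ξ : R) :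
    RG M.E M.rk (M.rk M.E) (x * y) (l * ξ) =
      ∑ T ∈ M.E.powerset,
        l ^ (M.rk M.E - M.rk T) * (-y) ^ (T.card - M.rk T) *
          RG T M.rk (M.rk T) (-x) (-l) *
          RG (M.E \ T) (fun A => M.rk (A ∪ T) - M.rk T) (M.rk M.E - M.rk T) y ξ := by
  have step : ∀ T ∈ M.E.powerset,
      l ^ (M.rk M.E - M.rk T) * (-y) ^ (T.card - M.rk T) *
          RG T M.rk (M.rk T) (-x) (-l) *
          RG (M.E \ T) (fun A => M.rk (A ∪ T) - M.rk T) (M.rk M.E - M.rk T) y ξ =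
      ∑ A ∈ T.powerset, ∑ B ∈ Finset.Icc T M.E,
        (x ^ (A.card - M.rk A) * l ^ (M.rk M.E - M.rk A) * y ^ (B.card - M.rk B) *
          ξ ^ (M.rk M.E - M.rk B)) * (-1) ^ (T.card + A.card) := by
    intro T hT
    rw [Finset.mem_powerset] at hT
    have h2 : RG (M.E \ T) (fun A => M.rk (A ∪ T) - M.rk T) (M.rk M.E - M.rk T) y ξ =
        ∑ B ∈ Finset.Icc T M.E, y ^ ((B \ T).card - (M.rk B - M.rk T)) *
          ξ ^ (M.rk M.E - M.rk T - (M.rk B - M.rk T)) := by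
      unfold RG
      refine Finset.sum_bij' (fun C _ => C ∪ T) (fun B _ => B \ T) ?_ ?_ ?_ ?_ ?_
      · intro C hC
        rw [Finset.mem_powerset] at hC
        exact Finset.mem_Icc.2 ⟨Finset.subset_union_right,
          Finset.union_subset (hC.trans Finset.sdiff_subset) hT⟩
      · intro B hB
        exact Finset.mem_powerset.2
          (Finset.sdiff_subset_sdiff (Finset.mem_Icc.1 hB).2 (Finset.Subset.refl _))
      · intro C hC
        rw [Finset.mem_powerset] at hC
        exact Finset.union_sdiff_cancel_right
          (Finset.disjoint_of_subset_left hC Finset.sdiff_disjoint)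
      · intro B hB
        exact Finset.sdiff_union_of_subset (Finset.mem_Icc.1 hB).1
      · intro C hC
        rw [Finset.mem_powerset] at hC
        rw [Finset.union_sdiff_cancel_right
          (Finset.disjoint_of_subset_left hC Finset.sdiff_disjoint)]
    rw [h2]
    unfold RG
    rw [Finset.mul_sum, Finset.sum_comm (s := T.powerset)]
    refine Finset.sum_congr rfl fun B hB => ?_
    rw [Finset.mul_sum, Finset.sum_mul]
    refine Finset.sum_congr rfl fun A hA => ?_
    exact term_eq M x y l ξ A T B (Finset.mem_powerset.1 hA) (Finset.mem_Icc.1 hB).1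
      (Finset.mem_Icc.1 hB).2
  rw [Finset.sum_congr rfl step,
    Finset.sum_comm' (t' := M.E.powerset) (s' := fun A => Finset.Icc A M.E)]
  · unfold RG
    refine Finset.sum_congr rfl fun A hA => ?_
    rw [Finset.mem_powerset] at hA
    rw [Finset.sum_comm' (t' := Finset.Icc A M.E) (s' := fun B => Finset.Icc A B)]
    · have : ∀ B ∈ Finset.Icc A M.E, ∑ T ∈ Finset.Icc A B,
          (x ^ (A.card - M.rk A) * l ^ (M.rk M.E - M.rk A) * y ^ (B.card - M.rk B) *
          ξ ^ (M.rk M.E - M.rk B)) * (-1) ^ (T.card + A.card) =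
          if A = B then (x ^ (A.card - M.rk A) * l ^ (M.rk M.E - M.rk A) *
            y ^ (B.card - M.rk B) * ξ ^ (M.rk M.E - M.rk B)) else 0 := by
        intro B hB
        rw [← Finset.mul_sum, alt_sum_Icc A B (Finset.mem_Icc.1 hB).1]
        simp
      rw [Finset.sum_congr rfl this, Finset.sum_ite_eq,
        if_pos (Finset.mem_Icc.2 ⟨Finset.Subset.refl _, hA⟩), mul_pow, mul_pow]
      ring
    · intro T B
      simp only [Finset.mem_Icc]
      exact ⟨fun h => ⟨⟨h.1.1, h.2.1⟩, h.1.1.trans h.2.1, h.2.2⟩,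
        fun h => ⟨⟨h.1.1, h.1.2.trans h.2.2⟩, h.1.2, h.2.2⟩⟩
  · intro T A
    simp only [Finset.mem_Icc, Finset.mem_powerset]
    exact ⟨fun h => ⟨⟨h.2, h.1⟩, h.2.trans h.1⟩, fun h => ⟨h.1.2, h.1.1⟩⟩
end

section
/- Let M be a finite matroid of rank r on ground set E. For all assignments of commuting variables x = (x_e)_{e∈E}, y = (y_e)_{e∈E} and ξ (equivalently, for all elements of any commutative ring), SC(M; (x_e·y_e)_{e∈E}, ξ) = ∑_{T ⊆ E} (∏_{e∈T} (x_e + 1)) · (∏_{e∈T} y_e) · SC(M/T; (−y_e)_{e∈E∖T}, ξ). -/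
open Finset

/-- Identity 4: the multivariate subset-corank polynomial as a weighted sum of
subset-corank polynomials of contractions. -/
theorem subset_corank_contraction_sum {α R : Type*} [DecidableEq α] [CommRing R]
    (M : FinMatroid α) (x y : α → R) (ξ : R) :
    SC M.E M.rk (M.rk M.E) (fun e => x e * y e) ξ =
      ∑ T ∈ M.E.powerset,
        (∏ e ∈ T, (x e + 1)) * (∏ e ∈ T, y e) *
          SC (M.E \ T) (fun A => M.rk (A ∪ T) - M.rk T) (M.rk M.E - M.rk T)
            (fun e => -y e) ξ := by
  have h1 : ∀ B ∈ M.E.powerset, (∏ e ∈ B, x e * y e) * ξ ^ (M.rk M.E - M.rk B) =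
      ∑ T ∈ B.powerset, (∏ e ∈ T, (x e + 1) * y e) * (∏ e ∈ B \ T, -y e) *
        ξ ^ (M.rk M.E - M.rk B) := by
    intro B _
    rw [← Finset.sum_mul, ← Finset.prod_add]
    congr 1
    refine Finset.prod_congr rfl fun e _ => ?_
    ring
  unfold SC
  rw [Finset.sum_congr rfl h1]
  simp_rw [Finset.mul_sum]
  rw [Finset.sum_sigma', Finset.sum_sigma']
  refine Finset.sum_bij' (fun p _ => ⟨p.2, p.1 \ p.2⟩) (fun q _ => ⟨q.2 ∪ q.1, q.1⟩)
    ?_ ?_ ?_ ?_ ?_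
  · rintro ⟨B, T⟩ h
    simp only [Finset.mem_sigma, Finset.mem_powerset] at h ⊢
    exact ⟨h.2.trans h.1, Finset.sdiff_subset_sdiff h.1 (Finset.Subset.refl _)⟩
  · rintro ⟨T, A⟩ h
    simp only [Finset.mem_sigma, Finset.mem_powerset] at h ⊢
    exact ⟨Finset.union_subset (h.2.trans Finset.sdiff_subset) h.1, Finset.subset_union_right⟩
  · rintro ⟨B, T⟩ h
    simp only [Finset.mem_sigma, Finset.mem_powerset] at h
    simp only [Finset.sdiff_union_of_subset h.2]
  · rintro ⟨T, A⟩ h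
    simp only [Finset.mem_sigma, Finset.mem_powerset] at h
    have hd : Disjoint A T := Finset.disjoint_of_subset_left h.2 Finset.sdiff_disjoint
    simp only [Finset.union_sdiff_cancel_right hd]
  · rintro ⟨B, T⟩ h
    simp only [Finset.mem_sigma, Finset.mem_powerset] at h
    have e1 := M.rk_mono h.2 h.1
    have e2 : M.rk M.E - M.rk T - (M.rk B - M.rk T) = M.rk M.E - M.rk B := by omega
    simp only [Finset.sdiff_union_of_subset h.2, e2, Finset.prod_mul_distrib]
    ring
end

section
/- Let M be a finite matroid of rank r on ground set E. For all assignments of commuting variables x = (x_e)_{e∈E} and ξ (equivalently, for all elements of any commutative ring), SC(M; x, ξ) = ∑_{X flat of M} (∏_{e∈X} (x_e + 1)) · χ(M/X; ξ), where the sum ranges over all flats (closed sets) X of M. -/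
open Finset

/-- The characteristic polynomial of the matroid-like data given by ground set `G`,
rank function `f`, and rank `s`: `χ = ∑_{A ⊆ G} (-1) ^ |A| * l ^ (s - f A)`. -/
def charPoly {α R : Type*} [DecidableEq α] [CommRing R] (G : Finset α) (f : Finset α → ℕ)
    (s : ℕ) (l : R) : R :=
  ∑ A ∈ G.powerset, (-1 : R) ^ A.card * l ^ (s - f A)

/-- A non-flat `X` gives a contraction with a loop, whose characteristic polynomial vanishes. -/
theorem charPoly_eq_zero_of_loop {α R : Type*} [DecidableEq α] [CommRing R]
    (M : FinMatroid α) (ξ : R) (X : Finset α) (hX : X ⊆ M.E) (e : α) (he : e ∈ M.E \ X)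
    (hr : M.rk (insert e X) ≤ M.rk X) :
    charPoly (M.E \ X) (fun A => M.rk (A ∪ X) - M.rk X) (M.rk M.E - M.rk X) ξ = 0 := by
  have heE : e ∈ M.E := (Finset.mem_sdiff.mp he).1
  unfold charPoly
  rw [← Finset.insert_erase he, Finset.sum_powerset_insert (Finset.notMem_erase e _),
    ← Finset.sum_add_distrib]
  refine Finset.sum_eq_zero fun A hA => ?_
  rw [Finset.mem_powerset] at hA
  have heA : e ∉ A := fun h => Finset.notMem_erase e _ (hA h)
  have hAE : A ⊆ M.E := hA.trans ((Finset.erase_subset _ _).trans Finset.sdiff_subset)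
  have hAX : A ∪ X ⊆ M.E := Finset.union_subset hAE hX
  have heX : insert e X ⊆ M.E := Finset.insert_subset heE hX
  have h1 := M.rk_submod hAX heX
  have h2 : (A ∪ X) ∪ insert e X = insert e A ∪ X := by
    ext a; simp only [Finset.mem_union, Finset.mem_insert]; tauto
  have h3 : M.rk X ≤ M.rk ((A ∪ X) ∩ insert e X) := by
    apply M.rk_mono
    · exact Finset.subset_inter Finset.subset_union_right (Finset.subset_insert _ _)
    · exact Finset.inter_subset_left.trans hAX
  have h4 : M.rk (A ∪ X) ≤ M.rk (insert e A ∪ X) := by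
    apply M.rk_mono
    · exact Finset.union_subset_union_left (Finset.subset_insert _ _)
    · exact Finset.union_subset (Finset.insert_subset heE hAE) hX
  rw [h2] at h1
  have h5 : M.rk (insert e A ∪ X) = M.rk (A ∪ X) := by omega
  simp only [h5, Finset.card_insert_of_notMem heA, pow_succ]
  ring

/-- Identity 5 (multivariate form): the subset-corank polynomial as a sum over flats
of weighted characteristic polynomials of contractions.  A flat of `M` is a subset `X`
of the ground set such that adjoining any element outside `X` strictly increases the
rank. -/
theorem subset_corank_flat_sum {α R : Type*} [DecidableEq α] [CommRing R]
    (M : FinMatroid α) (x : α → R) (ξ : R) :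
    SC M.E M.rk (M.rk M.E) x ξ =
      ∑ X ∈ M.E.powerset.filter (fun X => ∀ e ∈ M.E \ X, M.rk X < M.rk (insert e X)),
        (∏ e ∈ X, (x e + 1)) *
          charPoly (M.E \ X) (fun A => M.rk (A ∪ X) - M.rk X) (M.rk M.E - M.rk X) ξ := by
  rw [Finset.sum_filter_of_ne]
  swap
  · intro X hX hne e he
    by_contra hlt
    exact hne (by
      rw [charPoly_eq_zero_of_loop M ξ X (Finset.mem_powerset.mp hX) e he (not_lt.mp hlt),
        mul_zero])
  unfold SC charPoly
  have key : ∀ B ∈ M.E.powerset, (∏ e ∈ B, x e) * ξ ^ (M.rk M.E - M.rk B) =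
      ∑ X ∈ B.powerset, (∏ e ∈ X, (x e + 1)) *
        ((-1 : R) ^ (B \ X).card * ξ ^ (M.rk M.E - M.rk B)) := by
    intro B _
    have h := Finset.prod_add (fun e => x e + 1) (fun _ => (-1 : R)) B
    simp only [add_neg_cancel_right, Finset.prod_const] at h
    rw [h, Finset.sum_mul]
    exact Finset.sum_congr rfl fun X _ => by ring
  rw [Finset.sum_congr rfl key]
  simp only [Finset.mul_sum]
  rw [Finset.sum_sigma', Finset.sum_sigma']
  refine Finset.sum_bij' (fun p _ => ⟨p.2, p.1 \ p.2⟩) (fun p _ => ⟨p.2 ∪ p.1, p.1⟩)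
    ?_ ?_ ?_ ?_ ?_
  · rintro ⟨B, X⟩ h
    simp only [Finset.mem_sigma, Finset.mem_powerset] at h ⊢
    exact ⟨h.2.trans h.1, Finset.sdiff_subset_sdiff h.1 le_rfl⟩
  · rintro ⟨X, A⟩ h
    simp only [Finset.mem_sigma, Finset.mem_powerset] at h ⊢
    exact ⟨Finset.union_subset (h.2.trans Finset.sdiff_subset) h.1, Finset.subset_union_right⟩
  · rintro ⟨B, X⟩ h
    simp only [Finset.mem_sigma, Finset.mem_powerset] at h ⊢
    rw [Finset.sdiff_union_of_subset h.2]
  · rintro ⟨X, A⟩ h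
    simp only [Finset.mem_sigma, Finset.mem_powerset] at h ⊢
    have hd : Disjoint A X := Finset.disjoint_of_subset_left h.2 Finset.sdiff_disjoint
    rw [Finset.union_sdiff_cancel_right hd]
  · rintro ⟨B, X⟩ h
    simp only [Finset.mem_sigma, Finset.mem_powerset] at h ⊢
    have h1 := M.rk_mono h.2 h.1
    have h2 := M.rk_mono h.1 le_rfl
    rw [Finset.sdiff_union_of_subset h.2]
    congr 3
    omega
end

section
/- Let M be a finite matroid of rank r on ground set E. For all commuting variables x and ξ (equivalently, for all elements of any commutative ring), SC(M; x, ξ) = ∑_{X flat of M} (x + 1)^{|X|} · χ(M/X; ξ), where the sum ranges over all flats (closed sets) X of M. -/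
open Finset

/-- The (bivariate) size-corank polynomial of the matroid-like data given by
ground set `G`, rank function `f`, and normalizing rank `s`:
`SC = ∑_{A ⊆ G} x ^ |A| * l ^ (s - f A)`. -/
def SCsize {α R : Type*} [DecidableEq α] [CommRing R] (G : Finset α) (f : Finset α → ℕ)
    (s : ℕ) (x l : R) : R :=
  ∑ A ∈ G.powerset, x ^ A.card * l ^ (s - f A)

/-- The characteristic polynomial of the contraction by a non-flat vanishes. -/
theorem charPoly_nonflat {α R : Type*} [DecidableEq α] [CommRing R]
    (M : FinMatroid α) (ξ : R) (X : Finset α) (hX : X ⊆ M.E) (e : α) (he : e ∈ M.E \ X)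
    (hr : M.rk (insert e X) ≤ M.rk X) (s : ℕ) :
    charPoly (M.E \ X) (fun A => M.rk (A ∪ X) - M.rk X) s ξ = 0 := by
  unfold charPoly
  have heE : e ∈ M.E := (Finset.mem_sdiff.1 he).1
  have heX : e ∉ X := (Finset.mem_sdiff.1 he).2
  rw [← Finset.insert_erase he, Finset.sum_powerset_insert (Finset.notMem_erase _ _),
    ← Finset.sum_add_distrib]
  apply Finset.sum_eq_zero
  intro A hA
  rw [Finset.mem_powerset] at hA
  have heA : e ∉ A := fun h => Finset.notMem_erase _ _ (hA h)
  have hAE : A ⊆ M.E := fun a ha => (Finset.mem_sdiff.1 (Finset.mem_of_mem_erase (hA ha))).1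
  have hAX : A ∪ X ⊆ M.E := Finset.union_subset hAE hX
  have heX' : insert e X ⊆ M.E := Finset.insert_subset heE hX
  have h1 : (A ∪ X) ∪ insert e X = insert e A ∪ X := by
    ext a; simp only [Finset.mem_union, Finset.mem_insert]; tauto
  have h2 : (A ∪ X) ∩ insert e X = X := by
    ext a; simp only [Finset.mem_union, Finset.mem_insert, Finset.mem_inter]
    constructor
    · rintro ⟨h, rfl | h'⟩
      · tauto
      · exact h'
    · tauto
  have h3 := M.rk_submod hAX heX'
  rw [h1, h2] at h3
  have h4 : M.rk (A ∪ X) ≤ M.rk (insert e A ∪ X) := by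
    apply M.rk_mono
    · exact Finset.union_subset_union_left (Finset.subset_insert _ _)
    · exact Finset.union_subset (Finset.insert_subset heE hAE) hX
  have h5 : M.rk (insert e A ∪ X) = M.rk (A ∪ X) := by omega
  simp only [h5, Finset.card_insert_of_notMem heA, pow_succ]
  ring

/-- The characteristic polynomial of a contraction as a sum over supersets. -/
theorem charPoly_contract {α R : Type*} [DecidableEq α] [CommRing R]
    (M : FinMatroid α) (ξ : R) (X : Finset α) (hX : X ⊆ M.E) :
    charPoly (M.E \ X) (fun A => M.rk (A ∪ X) - M.rk X) (M.rk M.E - M.rk X) ξ =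
      ∑ B ∈ M.E.powerset.filter (fun B => X ⊆ B),
        (-1 : R) ^ (B.card - X.card) * ξ ^ (M.rk M.E - M.rk B) := by
  unfold charPoly
  refine Finset.sum_nbij' (fun A => A ∪ X) (fun B => B \ X) ?_ ?_ ?_ ?_ ?_
  · intro A hA
    rw [Finset.mem_powerset] at hA
    simp only [Finset.mem_filter, Finset.mem_powerset]
    exact ⟨Finset.union_subset (hA.trans Finset.sdiff_subset) hX, Finset.subset_union_right⟩
  · intro B hB
    simp only [Finset.mem_filter, Finset.mem_powerset] at hB ⊢
    exact Finset.sdiff_subset_sdiff hB.1 subset_rfl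
  · intro A hA
    rw [Finset.mem_powerset] at hA
    have : Disjoint A X := Finset.disjoint_of_subset_left hA Finset.sdiff_disjoint
    exact Finset.union_sdiff_cancel_right this
  · intro B hB
    simp only [Finset.mem_filter, Finset.mem_powerset] at hB
    exact Finset.sdiff_union_of_subset hB.2
  · intro A hA
    rw [Finset.mem_powerset] at hA
    have hd : Disjoint A X := Finset.disjoint_of_subset_left hA Finset.sdiff_disjoint
    have hs : A ∪ X ⊆ M.E := Finset.union_subset (hA.trans Finset.sdiff_subset) hX
    have h1 := M.rk_mono (Finset.subset_union_right : X ⊆ A ∪ X) hs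
    have h2 := M.rk_mono hs subset_rfl
    have h3 : (A ∪ X).card = A.card + X.card := Finset.card_union_of_disjoint hd
    rw [h3, Nat.add_sub_cancel]
    congr 2
    dsimp only
    omega

/-- Identity 5 (bivariate form): the size-corank polynomial as a sum over flats
of weighted characteristic polynomials of contractions.  A flat of `M` is a subset `X`
of the ground set such that adjoining any element outside `X` strictly increases the
rank. -/
theorem size_corank_flat_sum {α R : Type*} [DecidableEq α] [CommRing R]
    (M : FinMatroid α) (x ξ : R) :
    SCsize M.E M.rk (M.rk M.E) x ξ =
      ∑ X ∈ M.E.powerset.filter (fun X => ∀ e ∈ M.E \ X, M.rk X < M.rk (insert e X)),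
        (x + 1) ^ X.card *
          charPoly (M.E \ X) (fun A => M.rk (A ∪ X) - M.rk X) (M.rk M.E - M.rk X) ξ := by
  rw [Finset.sum_filter_of_ne]
  · rw [Finset.sum_congr rfl (fun X hX => by
      rw [charPoly_contract M ξ X (Finset.mem_powerset.1 hX), Finset.mul_sum])]
    rw [Finset.sum_comm' (t' := M.E.powerset) (s' := fun B => B.powerset)]
    · unfold SCsize
      refine Finset.sum_congr rfl (fun B _ => ?_)
      have h := Finset.sum_pow_mul_eq_add_pow (x + 1) (-1 : R) B
      rw [add_neg_cancel_right] at h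
      rw [← h, Finset.sum_mul]
      exact Finset.sum_congr rfl (fun X _ => by ring)
    · intro X B
      simp only [Finset.mem_filter, Finset.mem_powerset]
      constructor
      · rintro ⟨_, h, h'⟩
        exact ⟨h', h⟩
      · rintro ⟨h, h'⟩
        exact ⟨h.trans h', h', h⟩
  · intro X hX hne e he
    by_contra hlt
    exact hne (by
      rw [charPoly_nonflat M ξ X (Finset.mem_powerset.1 hX) e he (not_lt.1 hlt), mul_zero])
end

section
/- Let M be a finite matroid of rank r on ground set E. For all assignments of commuting variables y = (y_e)_{e∈E} and λ (equivalently, for all elements of any commutative ring), SC(M; (−y_e)_{e∈E}, λ) = ∑_{T ⊆ E} λ^{r − rk(T)} · χ(M|T; λ) · (∏_{e∈T} y_e) · (∏_{e∈E∖T} (1 − y_e)). -/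
open Finset

/-- Summing over all `T` between `B` and `E` collapses to the product over `B`. -/
theorem sum_superset_prod {α R : Type*} [DecidableEq α] [CommRing R]
    (E B : Finset α) (hB : B ⊆ E) (y : α → R) :
    ∑ T ∈ E.powerset with B ⊆ T, (∏ e ∈ T, y e) * (∏ e ∈ E \ T, (1 - y e)) = ∏ e ∈ B, y e := by
  have h := Finset.prod_add y (fun e => if e ∈ B then 0 else 1 - y e) E
  have h1 : ∏ e ∈ E, (y e + (if e ∈ B then 0 else 1 - y e)) = ∏ e ∈ B, y e := by
    rw [← Finset.prod_subset hB (f := fun e => y e + (if e ∈ B then 0 else 1 - y e))]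
    · exact Finset.prod_congr rfl (fun e he => by simp [he])
    · intro e _ he
      simp [he]
  rw [← h1, h, Finset.sum_filter]
  refine Finset.sum_congr rfl (fun T _ => ?_)
  split_ifs with hT
  · congr 1
    refine Finset.prod_congr rfl (fun e he => ?_)
    have : e ∉ B := fun hb => (Finset.mem_sdiff.1 he).2 (hT hb)
    simp [this]
  · obtain ⟨e, heB, heT⟩ := Finset.not_subset.1 hT
    rw [Finset.prod_eq_zero (Finset.mem_sdiff.2 ⟨hB heB, heT⟩) (by simp [heB]), mul_zero]

/-- Identity 6: the subset-corank polynomial at `-y` as a weighted sum of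
characteristic polynomials of restrictions. -/
theorem subset_corank_restriction_char_sum {α R : Type*} [DecidableEq α] [CommRing R]
    (M : FinMatroid α) (y : α → R) (l : R) :
    SC M.E M.rk (M.rk M.E) (fun e => -y e) l =
      ∑ T ∈ M.E.powerset,
        l ^ (M.rk M.E - M.rk T) * charPoly T M.rk (M.rk T) l *
          (∏ e ∈ T, y e) * (∏ e ∈ M.E \ T, (1 - y e)) := by
  unfold SC charPoly
  have key : ∀ T ∈ M.E.powerset,
      l ^ (M.rk M.E - M.rk T) * (∑ A ∈ T.powerset, (-1 : R) ^ A.card * l ^ (M.rk T - M.rk A)) *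
          (∏ e ∈ T, y e) * (∏ e ∈ M.E \ T, (1 - y e)) =
      ∑ A ∈ T.powerset, ((-1 : R) ^ A.card * l ^ (M.rk M.E - M.rk A)) *
          ((∏ e ∈ T, y e) * (∏ e ∈ M.E \ T, (1 - y e))) := by
    intro T hT
    have hT' := Finset.mem_powerset.1 hT
    rw [mul_assoc, Finset.mul_sum, Finset.sum_mul]
    refine Finset.sum_congr rfl (fun A hA => ?_)
    have h1 := M.rk_mono (Finset.mem_powerset.1 hA) hT'
    have h2 := M.rk_mono hT' (Finset.Subset.refl _)
    have h3 : M.rk M.E - M.rk A = (M.rk M.E - M.rk T) + (M.rk T - M.rk A) := by omega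
    rw [h3, pow_add]
    ring
  rw [Finset.sum_congr rfl key,
    Finset.sum_comm' (t' := M.E.powerset) (s' := fun A => M.E.powerset.filter (fun T => A ⊆ T))]
  · refine Finset.sum_congr rfl (fun A hA => ?_)
    rw [← Finset.mul_sum, sum_superset_prod M.E A (Finset.mem_powerset.1 hA) y, Finset.prod_neg]
    ring
  · intro T A
    simp only [Finset.mem_powerset, Finset.mem_filter]
    exact ⟨fun h => ⟨h, h.2.trans h.1⟩, fun h => h.1⟩
end

section
/- Let M be a finite matroid of rank r on ground set E. For all assignments of commuting variables x = (x_e)_{e∈E}, y = (y_e)_{e∈E} and λ (equivalently, for all elements of any commutative ring), SC(M; (x_e·y_e)_{e∈E}, λ) = ∑_{T ⊆ E} λ^{r − rk(T)} · SC(M|T; (x_e)_{e∈T}, λ) · (∏_{e∈T} y_e) · (∏_{e∈E∖T} (1 − y_e)). -/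
open Finset

theorem aux_sum_supersets {α R : Type*} [DecidableEq α] [CommRing R]
    (E A : Finset α) (hA : A ⊆ E) (y : α → R) :
    ∑ T ∈ E.powerset, (if A ⊆ T then (∏ e ∈ T, y e) * (∏ e ∈ E \ T, (1 - y e)) else 0)
      = ∏ e ∈ A, y e := by
  have h := Finset.prod_add y (fun e => if e ∈ A then 0 else 1 - y e) E
  have h2 : ∏ e ∈ E, (y e + (if e ∈ A then 0 else 1 - y e)) = ∏ e ∈ A, y e := by
    rw [← Finset.prod_subset hA (f := fun e => y e + (if e ∈ A then 0 else 1 - y e))]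
    · apply Finset.prod_congr rfl
      intro e he
      simp [he]
    · intro e _ he
      simp [he]
  rw [← h2, h]
  apply Finset.sum_congr rfl
  intro T _
  split_ifs with hT
  · congr 1
    apply Finset.prod_congr rfl
    intro e he
    have : e ∉ A := fun h => (Finset.mem_sdiff.1 he).2 (hT h)
    simp [this]
  · obtain ⟨e, heA, heT⟩ := Finset.not_subset.1 hT
    rw [Finset.prod_eq_zero (Finset.mem_sdiff.2 ⟨hA heA, heT⟩) (by simp [heA]), mul_zero]

/-- Identity 7: the subset-corank polynomial at `x·y` as a weighted sum of
subset-corank polynomials of restrictions. -/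
theorem subset_corank_restriction_sum {α R : Type*} [DecidableEq α] [CommRing R]
    (M : FinMatroid α) (x y : α → R) (l : R) :
    SC M.E M.rk (M.rk M.E) (fun e => x e * y e) l =
      ∑ T ∈ M.E.powerset,
        l ^ (M.rk M.E - M.rk T) * SC T M.rk (M.rk T) x l *
          (∏ e ∈ T, y e) * (∏ e ∈ M.E \ T, (1 - y e)) := by
  unfold SC
  have key : ∀ T ∈ M.E.powerset,
      l ^ (M.rk M.E - M.rk T) * (∑ A ∈ T.powerset, (∏ e ∈ A, x e) * l ^ (M.rk T - M.rk A)) *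
          (∏ e ∈ T, y e) * (∏ e ∈ M.E \ T, (1 - y e)) =
      ∑ A ∈ M.E.powerset, (∏ e ∈ A, x e) * l ^ (M.rk M.E - M.rk A) *
        (if A ⊆ T then (∏ e ∈ T, y e) * (∏ e ∈ M.E \ T, (1 - y e)) else 0) := by
    intro T hT
    have hTE := Finset.mem_powerset.1 hT
    rw [← Finset.sum_subset (Finset.powerset_mono.2 hTE)]
    · rw [Finset.mul_sum, Finset.sum_mul, Finset.sum_mul]
      apply Finset.sum_congr rfl
      intro A hA
      have hAT := Finset.mem_powerset.1 hA
      have h1 := M.rk_mono hAT hTE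
      have h2 := M.rk_mono hTE (Finset.Subset.refl _)
      have h3 : M.rk M.E - M.rk A = (M.rk M.E - M.rk T) + (M.rk T - M.rk A) := by omega
      rw [if_pos hAT, h3, pow_add]
      ring
    · intro A _ hA
      rw [if_neg (fun h => hA (Finset.mem_powerset.2 h)), mul_zero]
  rw [Finset.sum_congr rfl key, Finset.sum_comm]
  apply Finset.sum_congr rfl
  intro A hA
  rw [← Finset.mul_sum, aux_sum_supersets _ _ (Finset.mem_powerset.1 hA), Finset.prod_mul_distrib]
  ring
end

section
/- Let M be a finite matroid of rank r on ground set E. For all commuting variables x and ξ (equivalently, for all elements of any commutative ring), R(M; x, ξ) = ∑_{T ⊆ E} R(M|T; x, −1) · R(M/T; −1, ξ), where the sum ranges over all subsets T of E. -/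
open Finset

/-- Alternating sum over an interval of the Boolean lattice. -/
lemma krsev_alt {α R : Type*} [DecidableEq α] [CommRing R] (A B : Finset α) :
    ∑ T ∈ B.powerset with A ⊆ T, (-1 : R) ^ T.card = if A = B then (-1) ^ B.card else 0 := by
  by_cases hAB : A ⊆ B
  · have h1 : ∑ T ∈ B.powerset with A ⊆ T, (-1 : R) ^ T.card
        = ∑ S ∈ (B \ A).powerset, (-1 : R) ^ A.card * (-1) ^ S.card := by
      refine Finset.sum_nbij' (fun T => T \ A) (fun S => S ∪ A) ?_ ?_ ?_ ?_ ?_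
      · intro T hT
        simp only [mem_filter, mem_powerset] at hT ⊢
        exact sdiff_subset_sdiff hT.1 subset_rfl
      · intro S hS
        simp only [mem_filter, mem_powerset] at hS ⊢
        exact ⟨union_subset (hS.trans sdiff_subset) hAB, subset_union_right⟩
      · intro T hT
        simp only [mem_filter, mem_powerset] at hT
        exact sdiff_union_of_subset hT.2
      · intro S hS
        simp only [mem_powerset] at hS
        have hd : Disjoint S A := disjoint_of_subset_left hS sdiff_disjoint
        exact union_sdiff_cancel_right hd
      · intro T hT
        simp only [mem_filter, mem_powerset] at hT
        rw [← pow_add, add_comm, card_sdiff_add_card_eq_card hT.2]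
    have h2 : ∑ S ∈ (B \ A).powerset, (-1 : R) ^ S.card = if B \ A = ∅ then 1 else 0 := by
      have := congrArg (Int.cast : ℤ → R) (Finset.sum_powerset_neg_one_pow_card (x := B \ A))
      push_cast at this
      exact this
    rw [h1, ← mul_sum, h2]
    by_cases h : A = B
    · subst h; simp
    · have : B \ A ≠ ∅ := fun h' => h (subset_antisymm hAB (sdiff_eq_empty_iff_subset.1 h'))
      simp [h, this]
  · have h : A ≠ B := fun h => hAB (h ▸ subset_rfl)
    rw [if_neg h]
    apply sum_eq_zero
    intro T hT
    simp only [mem_filter, mem_powerset] at hT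
    exact absurd (hT.2.trans hT.1) hAB

/-- Reindexing the subsets of `E \ T` as the subsets of `E` containing `T`. -/
lemma krsev_reindex {α R : Type*} [DecidableEq α] [CommRing R] (E T : Finset α) (hT : T ⊆ E)
    (g : Finset α → R) :
    ∑ A ∈ (E \ T).powerset, g (A ∪ T) = ∑ B ∈ E.powerset with T ⊆ B, g B := by
  refine Finset.sum_nbij' (fun S => S ∪ T) (fun B => B \ T) ?_ ?_ ?_ ?_ ?_
  · intro S hS
    simp only [mem_filter, mem_powerset] at hS ⊢
    exact ⟨union_subset (hS.trans sdiff_subset) hT, subset_union_right⟩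
  · intro B hB
    simp only [mem_filter, mem_powerset] at hB ⊢
    exact sdiff_subset_sdiff hB.1 subset_rfl
  · intro S hS
    simp only [mem_powerset] at hS
    have hd : Disjoint S T := disjoint_of_subset_left hS sdiff_disjoint
    exact union_sdiff_cancel_right hd
  · intro B hB
    simp only [mem_filter, mem_powerset] at hB
    exact sdiff_union_of_subset hB.2
  · intros; rfl

/-- Parity of a natural exponent. -/
lemma krsev_sign {R : Type*} [CommRing R] (a b k l : ℕ) (h : a + 2 * k = b + 2 * l) :
    (-1 : R) ^ a = (-1) ^ b := by
  have := congrArg (fun n => (-1 : R) ^ n) h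
  simpa [pow_add, pow_mul] using this

/-- The convolution identity of Kook–Reiner–Stanton and Étienne–Las Vergnas for the
rank generating polynomial. -/
theorem rank_generating_KRSEV {α R : Type*} [DecidableEq α] [CommRing R]
    (M : FinMatroid α) (x ξ : R) :
    RG M.E M.rk (M.rk M.E) x ξ =
      ∑ T ∈ M.E.powerset,
        RG T M.rk (M.rk T) x (-1) *
          RG (M.E \ T) (fun A => M.rk (A ∪ T) - M.rk T) (M.rk M.E - M.rk T) (-1) ξ := by
  have key : ∀ T ∈ M.E.powerset,
      RG T M.rk (M.rk T) x (-1) *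
        RG (M.E \ T) (fun A => M.rk (A ∪ T) - M.rk T) (M.rk M.E - M.rk T) (-1) ξ
      = ∑ A ∈ M.E.powerset, ∑ B ∈ M.E.powerset,
        x ^ (A.card - M.rk A) * ξ ^ (M.rk M.E - M.rk B) *
          (-1) ^ (M.rk A + M.rk B + B.card) *
          (if T ⊆ B ∧ A ⊆ T then (-1) ^ T.card else 0) := by
    intro T hT
    rw [mem_powerset] at hT
    have h2 : RG (M.E \ T) (fun A => M.rk (A ∪ T) - M.rk T) (M.rk M.E - M.rk T) (-1) ξ
        = ∑ B ∈ M.E.powerset with T ⊆ B,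
          (-1 : R) ^ (M.rk T + M.rk B + B.card + T.card) * ξ ^ (M.rk M.E - M.rk B) := by
      rw [← krsev_reindex M.E T hT, RG]
      apply sum_congr rfl
      intro S hS
      rw [mem_powerset] at hS
      have hd : Disjoint S T := disjoint_of_subset_left hS sdiff_disjoint
      have hSE : S ⊆ M.E := hS.trans sdiff_subset
      have hc := card_union_of_disjoint hd
      have hm := M.rk_mono (subset_union_right : T ⊆ S ∪ T) (union_subset hSE hT)
      have hm2 := M.rk_mono (union_subset hSE hT) subset_rfl
      have hs := M.rk_submod hSE hT
      have hr := M.rk_le_card S hSE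
      congr 1
      · apply krsev_sign _ _ (M.rk (S ∪ T) + T.card) 0
        omega
      · congr 1; omega
    have h1 : RG T M.rk (M.rk T) x (-1)
        = ∑ A ∈ M.E.powerset with A ⊆ T, x ^ (A.card - M.rk A) * (-1) ^ (M.rk T + M.rk A) := by
      have : M.E.powerset.filter (fun A => A ⊆ T) = T.powerset := by
        ext A
        simp only [mem_filter, mem_powerset]
        exact ⟨fun h => h.2, fun h => ⟨h.trans hT, h⟩⟩
      rw [this, RG]
      apply sum_congr rfl
      intro A hA
      rw [mem_powerset] at hA
      have := M.rk_mono hA hT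
      congr 1
      apply krsev_sign _ _ (M.rk A) 0
      omega
    rw [h1, h2, sum_filter, sum_filter, sum_mul_sum]
    apply sum_congr rfl
    intro A _
    apply sum_congr rfl
    intro B _
    by_cases hA : A ⊆ T <;> by_cases hB : T ⊆ B <;> simp only [hA, hB, if_true, if_false,
      mul_zero, zero_mul, and_true, and_false, and_self]
    have hs : (-1 : R) ^ (M.rk T + M.rk A) * (-1) ^ (M.rk T + M.rk B + B.card + T.card)
        = (-1) ^ (M.rk A + M.rk B + B.card) * (-1) ^ T.card := by
      rw [← pow_add, ← pow_add]
      apply krsev_sign _ _ 0 (M.rk T)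
      omega
    linear_combination (x ^ (A.card - M.rk A) * ξ ^ (M.rk M.E - M.rk B)) * hs
  rw [sum_congr rfl key, sum_comm, RG]
  apply sum_congr rfl
  intro A hA
  rw [sum_comm]
  have inner : ∀ B ∈ M.E.powerset, ∑ T ∈ M.E.powerset,
      x ^ (A.card - M.rk A) * ξ ^ (M.rk M.E - M.rk B) *
          (-1) ^ (M.rk A + M.rk B + B.card) *
          (if T ⊆ B ∧ A ⊆ T then (-1) ^ T.card else 0)
      = if A = B then x ^ (A.card - M.rk A) * ξ ^ (M.rk M.E - M.rk A) else 0 := by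
    intro B hB
    rw [mem_powerset] at hB
    have hf : M.E.powerset.filter (fun T => T ⊆ B ∧ A ⊆ T)
        = B.powerset.filter (fun T => A ⊆ T) := by
      ext T
      simp only [mem_filter, mem_powerset]
      exact ⟨fun h => h.2, fun h => ⟨h.1.trans hB, h⟩⟩
    rw [← mul_sum, ← sum_filter, hf, krsev_alt]
    by_cases h : A = B
    · subst h
      have hs : (-1 : R) ^ (M.rk A + M.rk A + A.card) * (-1) ^ A.card = 1 := by
        rw [← pow_add]
        refine (krsev_sign _ 0 0 (M.rk A + A.card) ?_).trans (pow_zero _)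
        omega
      simp only [if_true]
      rw [mul_assoc, hs, mul_one]
    · simp [h]
  rw [sum_congr rfl inner, sum_ite_eq, if_pos hA]
end

section
/- Let M be a finite matroid of rank r on ground set E. For all commuting variables x and ξ (equivalently, for all elements of any commutative ring), R(M; x, ξ) = ∑_{T cyclic flat of M} R(M|T; x, −1) · R(M/T; −1, ξ), where the sum ranges over all cyclic flats T of M, i.e., flats T such that the restriction M|T has no coloops. -/
open Finset

namespace FinMatroid

variable {α R : Type*} [DecidableEq α] [CommRing R]

theorem rk_insert_le (M : FinMatroid α) {A : Finset α} {e : α} (hA : A ⊆ M.E) (he : e ∈ M.E) :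
    M.rk (insert e A) ≤ M.rk A + 1 := by
  have h1 := M.rk_submod (A := {e}) (B := A) (by simpa using he) hA
  have h2 := M.rk_le_card {e} (by simpa using he)
  rw [← Finset.insert_eq] at h1
  simp at h2
  omega

theorem rk_union_le (M : FinMatroid α) {A T : Finset α} (hA : A ⊆ M.E) (hT : T ⊆ M.E) :
    M.rk (A ∪ T) ≤ M.rk T + A.card := by
  have h1 := M.rk_submod hA hT
  have h2 := M.rk_le_card A hA
  omega

theorem RG_coloop (M : FinMatroid α) (x : R) {T : Finset α} (hT : T ⊆ M.E) {e : α} (he : e ∈ T)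
    (hne : M.rk (T.erase e) ≠ M.rk T) : RG T M.rk (M.rk T) x (-1) = 0 := by
  have hlt : M.rk (T.erase e) < M.rk T :=
    lt_of_le_of_ne (M.rk_mono (Finset.erase_subset _ _) hT) hne
  unfold RG
  have hp : T.powerset = (insert e (T.erase e)).powerset := by rw [Finset.insert_erase he]
  rw [hp, Finset.sum_powerset_insert (Finset.notMem_erase e T), ← Finset.sum_add_distrib]
  apply Finset.sum_eq_zero
  intro A hA
  rw [Finset.mem_powerset] at hA
  have heA : e ∉ A := fun h => Finset.notMem_erase e T (hA h)
  have hAT : A ⊆ T := hA.trans (Finset.erase_subset _ _)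
  have hiT : insert e A ⊆ T := Finset.insert_subset he hAT
  have h1 := M.rk_insert_le (hAT.trans hT) (hT he)
  have h2 := M.rk_submod (hiT.trans hT) ((Finset.erase_subset e T).trans hT)
  have h3 : insert e A ∪ T.erase e = T := by
    ext a; by_cases h : a = e
    · subst h; simp [he]
    · simp [h]; intro h'; exact hAT h'
  have h4 : insert e A ∩ T.erase e = A := by
    ext a; by_cases h : a = e
    · subst h; simp [heA]
    · simp [h]; intro h'; exact hAT h'
  rw [h3, h4] at h2
  have h5 : M.rk (insert e A) = M.rk A + 1 := by omega
  have h6 := M.rk_mono hiT hT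
  rw [Finset.card_insert_of_notMem heA, h5]
  obtain ⟨k, hk⟩ : ∃ k, M.rk T = M.rk A + 1 + k := ⟨M.rk T - (M.rk A + 1), by omega⟩
  have e1 : M.rk T - M.rk A = k + 1 := by omega
  have e2 : M.rk T - (M.rk A + 1) = k := by omega
  rw [e1, e2, Nat.add_sub_add_right, pow_succ]
  ring

theorem RG_nonflat (M : FinMatroid α) (ξ : R) {T : Finset α} (hT : T ⊆ M.E) {e : α}
    (he : e ∈ M.E \ T) (hne : ¬ M.rk T < M.rk (insert e T)) :
    RG (M.E \ T) (fun A => M.rk (A ∪ T) - M.rk T) (M.rk M.E - M.rk T) (-1) ξ = 0 := by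
  have heE : e ∈ M.E := (Finset.mem_sdiff.1 he).1
  have heT : e ∉ T := (Finset.mem_sdiff.1 he).2
  unfold RG
  have hp : (M.E \ T).powerset = (insert e ((M.E \ T).erase e)).powerset := by
    rw [Finset.insert_erase he]
  rw [hp, Finset.sum_powerset_insert (Finset.notMem_erase e _), ← Finset.sum_add_distrib]
  apply Finset.sum_eq_zero
  intro A hA
  rw [Finset.mem_powerset] at hA
  have heA : e ∉ A := fun h => Finset.notMem_erase e _ (hA h)
  have hAE : A ⊆ M.E := hA.trans ((Finset.erase_subset _ _).trans Finset.sdiff_subset)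
  have hAT : A ∪ T ⊆ M.E := Finset.union_subset hAE hT
  have hiT : insert e T ⊆ M.E := Finset.insert_subset heE hT
  have h1 := M.rk_submod hAT hiT
  have h3 : (A ∪ T) ∪ insert e T = insert e A ∪ T := by
    ext a; simp
  have h4 : (A ∪ T) ∩ insert e T = T := by
    ext a; by_cases h : a = e
    · subst h; simp [heA]
    · simp [h]; exact Or.inr
  rw [h3, h4] at h1
  have h5 : M.rk (A ∪ T) ≤ M.rk (insert e A ∪ T) :=
    M.rk_mono (Finset.union_subset_union_left (Finset.subset_insert _ _))
      (Finset.union_subset (Finset.insert_subset heE hAE) hT)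
  have h6 : M.rk (insert e A ∪ T) = M.rk (A ∪ T) := by omega
  have h7 := M.rk_union_le hAE hT
  simp only [h6]
  rw [Finset.card_insert_of_notMem heA]
  have e1 : A.card + 1 - (M.rk (A ∪ T) - M.rk T) = A.card - (M.rk (A ∪ T) - M.rk T) + 1 := by
    omega
  rw [e1, pow_succ]
  ring

theorem alt_sum (E A B : Finset α) (hB : B ⊆ E) (hAB : A ⊆ B) :
    ∑ T ∈ E.powerset with A ⊆ T ∧ T ⊆ B, (-1 : R) ^ (B \ T).card = if A = B then 1 else 0 := by
  have h1 : ∑ T ∈ E.powerset with A ⊆ T ∧ T ⊆ B, (-1 : R) ^ (B \ T).card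
      = ∑ S ∈ (B \ A).powerset, (-1 : R) ^ S.card := by
    refine Finset.sum_bij' (fun T _ => B \ T) (fun S _ => B \ S) ?_ ?_ ?_ ?_ ?_
    · intro T hT
      simp only [Finset.mem_filter, Finset.mem_powerset] at hT ⊢
      exact Finset.sdiff_subset_sdiff subset_rfl hT.2.1
    · intro S hS
      simp only [Finset.mem_filter, Finset.mem_powerset] at hS ⊢
      refine ⟨Finset.sdiff_subset.trans hB, ?_, Finset.sdiff_subset⟩
      intro a ha
      exact Finset.mem_sdiff.2 ⟨hAB ha, fun h => (Finset.mem_sdiff.1 (hS h)).2 ha⟩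
    · intro T hT
      simp only [Finset.mem_filter, Finset.mem_powerset] at hT
      exact Finset.sdiff_sdiff_eq_self hT.2.2
    · intro S hS
      simp only [Finset.mem_powerset] at hS
      exact Finset.sdiff_sdiff_eq_self (hS.trans Finset.sdiff_subset)
    · intros; rfl
  rw [h1]
  have h2 := congrArg (Int.cast (R := R)) (Finset.sum_powerset_neg_one_pow_card (x := B \ A))
  push_cast at h2
  rw [h2]
  have h3 : B \ A = ∅ ↔ A = B := by
    rw [Finset.sdiff_eq_empty_iff_subset]
    exact ⟨fun h => hAB.antisymm h, fun h => h ▸ subset_rfl⟩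
  simp [h3]

theorem RG_contract (M : FinMatroid α) (y ξ : R) {T : Finset α} (hT : T ⊆ M.E) :
    RG (M.E \ T) (fun A => M.rk (A ∪ T) - M.rk T) (M.rk M.E - M.rk T) y ξ =
      ∑ B ∈ M.E.powerset with T ⊆ B,
        y ^ ((B \ T).card - (M.rk B - M.rk T)) * ξ ^ (M.rk M.E - M.rk B) := by
  unfold RG
  refine Finset.sum_bij' (fun A _ => A ∪ T) (fun B _ => B \ T) ?_ ?_ ?_ ?_ ?_
  · intro A hA
    simp only [Finset.mem_filter, Finset.mem_powerset] at hA ⊢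
    exact ⟨Finset.union_subset (hA.trans Finset.sdiff_subset) hT, Finset.subset_union_right⟩
  · intro B hB
    simp only [Finset.mem_filter, Finset.mem_powerset] at hB ⊢
    exact Finset.sdiff_subset_sdiff hB.1 subset_rfl
  · intro A hA
    simp only [Finset.mem_powerset] at hA
    exact Finset.union_sdiff_cancel_right
      (Finset.disjoint_of_subset_left hA Finset.sdiff_disjoint)
  · intro B hB
    simp only [Finset.mem_filter, Finset.mem_powerset] at hB
    exact Finset.sdiff_union_of_subset hB.2
  · intro A hA
    simp only [Finset.mem_powerset] at hA
    have hd : (A ∪ T) \ T = A := Finset.union_sdiff_cancel_right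
      (Finset.disjoint_of_subset_left hA Finset.sdiff_disjoint)
    have hm : M.rk T ≤ M.rk (A ∪ T) := M.rk_mono Finset.subset_union_right
      (Finset.union_subset (hA.trans Finset.sdiff_subset) hT)
    have e : M.rk M.E - M.rk T - (M.rk (A ∪ T) - M.rk T) = M.rk M.E - M.rk (A ∪ T) := by omega
    simp only [hd, e]

theorem sign_eq (M : FinMatroid α) {A T B : Finset α} (hAT : A ⊆ T) (hTB : T ⊆ B)
    (hB : B ⊆ M.E) :
    (-1 : R) ^ (M.rk T - M.rk A) * (-1) ^ ((B \ T).card - (M.rk B - M.rk T)) =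
      (-1) ^ (M.rk B - M.rk A) * (-1) ^ (B \ T).card := by
  have h1 := M.rk_mono hAT (hTB.trans hB)
  have h2 := M.rk_mono hTB hB
  have h3 := M.rk_union_le (Finset.sdiff_subset.trans hB : B \ T ⊆ M.E) (hTB.trans hB)
  rw [Finset.sdiff_union_of_subset hTB] at h3
  rw [← pow_add, ← pow_add]
  obtain ⟨k, hk⟩ : ∃ k, k = M.rk B - M.rk T := ⟨_, rfl⟩
  have e : M.rk B - M.rk A + (B \ T).card =
    (M.rk T - M.rk A + ((B \ T).card - (M.rk B - M.rk T))) + 2 * k := by omega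
  rw [e, pow_add _ _ (2 * k), pow_mul]
  simp

theorem full_conv (M : FinMatroid α) (x ξ : R) :
    ∑ T ∈ M.E.powerset, RG T M.rk (M.rk T) x (-1) *
        RG (M.E \ T) (fun A => M.rk (A ∪ T) - M.rk T) (M.rk M.E - M.rk T) (-1) ξ =
      RG M.E M.rk (M.rk M.E) x ξ := by
  have h1 : ∀ T ∈ M.E.powerset, RG T M.rk (M.rk T) x (-1) *
        RG (M.E \ T) (fun A => M.rk (A ∪ T) - M.rk T) (M.rk M.E - M.rk T) (-1) ξ =
      ∑ A ∈ M.E.powerset, ∑ B ∈ M.E.powerset, if A ⊆ T ∧ T ⊆ B then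
        (x ^ (A.card - M.rk A) * ξ ^ (M.rk M.E - M.rk B) * (-1) ^ (M.rk B - M.rk A)) *
          (-1) ^ (B \ T).card else 0 := by
    intro T hT
    rw [Finset.mem_powerset] at hT
    rw [M.RG_contract _ _ hT]
    unfold RG
    have hp : T.powerset = M.E.powerset.filter (fun A => A ⊆ T) := by
      ext A; simp only [Finset.mem_filter, Finset.mem_powerset]
      exact ⟨fun h => ⟨h.trans hT, h⟩, fun h => h.2⟩
    rw [hp, Finset.sum_mul_sum, Finset.sum_filter]
    refine Finset.sum_congr rfl fun A _ => ?_
    split_ifs with hA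
    · rw [Finset.sum_filter]
      refine Finset.sum_congr rfl fun B hB => ?_
      rw [Finset.mem_powerset] at hB
      by_cases hTB : T ⊆ B
      · simp only [hA, hTB, and_self, if_true]
        have := M.sign_eq (R := R) hA hTB hB
        linear_combination (x ^ (A.card - M.rk A) * ξ ^ (M.rk M.E - M.rk B)) * this
      · simp [hTB]
    · simp [hA]
  rw [Finset.sum_congr rfl h1, Finset.sum_comm]
  unfold RG
  refine Finset.sum_congr rfl fun A hA => ?_
  rw [Finset.sum_comm, Finset.sum_eq_single A]
  · rw [← Finset.sum_filter, ← Finset.mul_sum,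
      alt_sum M.E A A (Finset.mem_powerset.1 hA) subset_rfl]
    simp
  · intro B hB hBA
    rw [← Finset.sum_filter, ← Finset.mul_sum]
    by_cases hAB : A ⊆ B
    · rw [alt_sum M.E A B (Finset.mem_powerset.1 hB) hAB, if_neg (Ne.symm hBA), mul_zero]
    · rw [Finset.filter_false_of_mem]
      · simp
      · intro T _ h
        exact hAB (h.1.trans h.2)
  · intro h; exact absurd hA h

end FinMatroid

/-- The Kook–Reiner–Stanton / Étienne–Las Vergnas convolution identity with the sum
restricted to cyclic flats: flats `T` (subsets such that adjoining any outside element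
strictly increases the rank) such that `M|T` has no coloops (removing any element of
`T` does not decrease the rank). -/
theorem rank_generating_KRSEV_cyclic_flats {α R : Type*} [DecidableEq α] [CommRing R]
    (M : FinMatroid α) (x ξ : R) :
    RG M.E M.rk (M.rk M.E) x ξ =
      ∑ T ∈ M.E.powerset.filter (fun T =>
          (∀ e ∈ M.E \ T, M.rk T < M.rk (insert e T)) ∧
          (∀ e ∈ T, M.rk (T.erase e) = M.rk T)),
        RG T M.rk (M.rk T) x (-1) *
          RG (M.E \ T) (fun A => M.rk (A ∪ T) - M.rk T) (M.rk M.E - M.rk T) (-1) ξ := by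
  rw [← M.full_conv x ξ]
  symm
  apply Finset.sum_subset (Finset.filter_subset _ _)
  intro T hT hn
  have hTE := Finset.mem_powerset.1 hT
  rw [Finset.mem_filter, not_and, not_and_or] at hn
  rcases hn hT with h | h
  · push Not at h
    obtain ⟨e, he, h⟩ := h
    rw [M.RG_nonflat ξ hTE he (not_lt.2 h), mul_zero]
  · push Not at h
    obtain ⟨e, he, h⟩ := h
    rw [M.RG_coloop x hTE he h, zero_mul]
end

section
/- Let M be a finite matroid of rank r on ground set E. For all commuting variables x and ξ (equivalently, for all elements of any commutative ring), (−1)^r · R(M; −x, −ξ) = ∑_{X cyclic flat of M} (−1)^{|X|} · χ((M|X)^⊥; x) · χ(M/X; ξ), where the sum ranges over all cyclic flats X of M and (M|X)^⊥ denotes the dual matroid of the restriction M|X. -/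
open Finset

theorem sum_powerset_cancel {α R : Type*} [DecidableEq α] [CommRing R] (G : Finset α) (e : α)
    (he : e ∈ G) (f : Finset α → R)
    (hf : ∀ A ⊆ G, e ∉ A → f (insert e A) = - f A) : ∑ A ∈ G.powerset, f A = 0 := by
  rw [← Finset.insert_erase he, Finset.sum_powerset_insert (Finset.notMem_erase e G),
    ← Finset.sum_add_distrib]
  apply Finset.sum_eq_zero
  intro A hA
  rw [Finset.mem_powerset] at hA
  rw [hf A (hA.trans (Finset.erase_subset _ _)) (fun h => Finset.notMem_erase e G (hA h))]
  ring

theorem interval_sum {α R : Type*} [DecidableEq α] [CommRing R] (G C D : Finset α)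
    (hD : D ⊆ G) :
    ∑ X ∈ G.powerset, (if C ⊆ X ∧ X ⊆ D then (-1 : R) ^ X.card else 0) =
      if C = D then (-1 : R) ^ C.card else 0 := by
  split_ifs with h
  · subst h
    rw [Finset.sum_eq_single C]
    · simp
    · intro X _ hX
      rw [if_neg]
      rintro ⟨h1, h2⟩
      exact hX (Finset.Subset.antisymm h2 h1)
    · intro h
      exact absurd (Finset.mem_powerset.2 hD) h
  · by_cases hCD : C ⊆ D
    · obtain ⟨e, he, heC⟩ : ∃ e ∈ D, e ∉ C := by
        by_contra hcon
        push Not at hcon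
        exact h (Finset.Subset.antisymm hCD hcon)
      apply sum_powerset_cancel G e (hD he)
      intro A _ heA
      have h1 : (C ⊆ insert e A ∧ insert e A ⊆ D) ↔ (C ⊆ A ∧ A ⊆ D) := by
        rw [Finset.subset_insert_iff_of_notMem heC, Finset.insert_subset_iff]
        tauto
      simp only [h1, Finset.card_insert_of_notMem heA]
      split_ifs <;> ring
    · apply Finset.sum_eq_zero
      intro X _
      rw [if_neg]
      rintro ⟨h1, h2⟩
      exact hCD (h1.trans h2)

theorem convolution_collapse {α R : Type*} [DecidableEq α] [CommRing R] (G : Finset α)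
    (p q : Finset α → R) :
    ∑ X ∈ G.powerset, (-1 : R) ^ X.card * (∑ C ∈ X.powerset, p C) *
      (∑ D ∈ G.powerset with X ⊆ D, q D) = ∑ C ∈ G.powerset, (-1 : R) ^ C.card * p C * q C := by
  have h1 : ∀ X ∈ G.powerset, (-1 : R) ^ X.card * (∑ C ∈ X.powerset, p C) *
      (∑ D ∈ G.powerset with X ⊆ D, q D) = ∑ C ∈ G.powerset, ∑ D ∈ G.powerset,
        p C * q D * (if C ⊆ X ∧ X ⊆ D then (-1 : R) ^ X.card else 0) := by
    intro X hX
    rw [Finset.mem_powerset] at hX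
    have : X.powerset = G.powerset.filter (fun C => C ⊆ X) := by
      ext C
      simp only [Finset.mem_powerset, Finset.mem_filter]
      exact ⟨fun h => ⟨h.trans hX, h⟩, fun h => h.2⟩
    rw [this, Finset.sum_filter, Finset.sum_filter, mul_assoc, Finset.sum_mul_sum, Finset.mul_sum]
    refine Finset.sum_congr rfl fun C _ => ?_
    rw [Finset.mul_sum]
    refine Finset.sum_congr rfl fun D _ => ?_
    by_cases ha : C ⊆ X <;> by_cases hb : X ⊆ D <;> simp [ha, hb]
    ring
  rw [Finset.sum_congr rfl h1, Finset.sum_comm]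
  refine Finset.sum_congr rfl fun C hC => ?_
  rw [Finset.sum_comm]
  have h2 : ∀ D ∈ G.powerset, ∑ X ∈ G.powerset,
      p C * q D * (if C ⊆ X ∧ X ⊆ D then (-1 : R) ^ X.card else 0) =
      if C = D then (-1 : R) ^ C.card * p C * q D else 0 := by
    intro D hD
    rw [← Finset.mul_sum, interval_sum G C D (Finset.mem_powerset.1 hD)]
    split_ifs <;> ring
  rw [Finset.sum_congr rfl h2, Finset.sum_ite_eq, if_pos hC]

theorem contract_vanish {α R : Type*} [DecidableEq α] [CommRing R] (M : FinMatroid α)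
    (X : Finset α) (hX : X ⊆ M.E) (e : α) (he : e ∈ M.E \ X)
    (h : M.rk (insert e X) ≤ M.rk X) (s : ℕ) (l : R) :
    charPoly (M.E \ X) (fun A => M.rk (A ∪ X) - M.rk X) s l = 0 := by
  unfold charPoly
  apply sum_powerset_cancel _ e he
  intro A hA heA
  rw [Finset.mem_sdiff] at he
  have hA' : A ⊆ M.E := hA.trans Finset.sdiff_subset
  have hAX : A ∪ X ⊆ M.E := Finset.union_subset hA' hX
  have hiX : insert e X ⊆ M.E := Finset.insert_subset he.1 hX
  have e1 : (A ∪ X) ∪ insert e X = insert e A ∪ X := by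
    ext a; simp only [Finset.mem_union, Finset.mem_insert]; tauto
  have e2 : (A ∪ X) ∩ insert e X = X := by
    ext a; simp only [Finset.mem_union, Finset.mem_insert, Finset.mem_inter]
    constructor
    · rintro ⟨h1 | h1, rfl | h2⟩ <;> tauto
    · tauto
  have h3 := M.rk_submod hAX hiX
  have h4 : M.rk (A ∪ X) ≤ M.rk (insert e A ∪ X) := by
    apply M.rk_mono
    · exact Finset.union_subset_union_left (Finset.subset_insert _ _)
    · rw [← e1]; exact Finset.union_subset hAX hiX
  rw [e1, e2] at h3
  have h5 : M.rk (insert e A ∪ X) = M.rk (A ∪ X) := by omega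
  simp only [h5, Finset.card_insert_of_notMem heA]
  ring

theorem dual_vanish {α R : Type*} [DecidableEq α] [CommRing R] (M : FinMatroid α)
    (X : Finset α) (hX : X ⊆ M.E) (e : α) (he : e ∈ X)
    (h : M.rk (X.erase e) ≠ M.rk X) (s : ℕ) (l : R) :
    charPoly X (fun A => A.card + M.rk (X \ A) - M.rk X) s l = 0 := by
  unfold charPoly
  apply sum_powerset_cancel _ e he
  intro A hA heA
  have h0 := M.rk_mono (Finset.erase_subset e X) hX
  have hS : X \ A ⊆ M.E := Finset.sdiff_subset.trans hX
  have hT : X \ insert e A ⊆ M.E := Finset.sdiff_subset.trans hX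
  have hE : X.erase e ⊆ M.E := (Finset.erase_subset e X).trans hX
  have hs : ({e} : Finset α) ⊆ M.E := by simpa using hX he
  have e1 : (X \ A) ∪ X.erase e = X := by
    ext a; simp only [Finset.mem_union, Finset.mem_sdiff, Finset.mem_erase]
    by_cases hae : a = e
    · subst hae; tauto
    · tauto
  have e2 : (X \ A) ∩ X.erase e = X \ insert e A := by
    ext a; simp only [Finset.mem_inter, Finset.mem_sdiff, Finset.mem_erase, Finset.mem_insert]
    tauto
  have e3 : (X \ insert e A) ∪ {e} = X \ A := by
    ext a; simp only [Finset.mem_union, Finset.mem_sdiff, Finset.mem_singleton, Finset.mem_insert]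
    by_cases hae : a = e
    · subst hae; tauto
    · tauto
  have h1 := M.rk_submod hS hE
  have h2 := M.rk_submod hT hs
  have h3 := M.rk_le_card {e} hs
  rw [e1, e2] at h1
  rw [e3] at h2
  rw [Finset.card_singleton] at h3
  have h5 : (insert e A).card + M.rk (X \ insert e A) = A.card + M.rk (X \ A) := by
    rw [Finset.card_insert_of_notMem heA]; omega
  simp only [h5]
  rw [Finset.card_insert_of_notMem heA]
  ring

theorem contract_rewrite {α R : Type*} [DecidableEq α] [CommRing R] (M : FinMatroid α)
    (X : Finset α) (hX : X ⊆ M.E) (l : R) :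
    charPoly (M.E \ X) (fun A => M.rk (A ∪ X) - M.rk X) (M.rk M.E - M.rk X) l =
    (-1) ^ X.card * ∑ D ∈ M.E.powerset with X ⊆ D, (-1) ^ D.card * l ^ (M.rk M.E - M.rk D) := by
  unfold charPoly
  rw [Finset.mul_sum]
  refine Finset.sum_bij' (fun A _ => A ∪ X) (fun D _ => D \ X) ?_ ?_ ?_ ?_ ?_
  · intro A hA
    simp only [Finset.mem_filter, Finset.mem_powerset] at hA ⊢
    exact ⟨Finset.union_subset (hA.trans Finset.sdiff_subset) hX, Finset.subset_union_right⟩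
  · intro D hD
    simp only [Finset.mem_filter, Finset.mem_powerset] at hD ⊢
    exact Finset.sdiff_subset_sdiff hD.1 (Finset.Subset.refl _)
  · intro A hA
    rw [Finset.mem_powerset] at hA
    exact Finset.union_sdiff_cancel_right (Finset.disjoint_of_subset_left hA Finset.sdiff_disjoint)
  · intro D hD
    simp only [Finset.mem_filter, Finset.mem_powerset] at hD
    exact Finset.sdiff_union_of_subset hD.2
  · intro A hA
    rw [Finset.mem_powerset] at hA
    have hU : A ∪ X ⊆ M.E := Finset.union_subset (hA.trans Finset.sdiff_subset) hX
    have h1 := M.rk_mono (Finset.subset_union_right : X ⊆ A ∪ X) hU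
    have h2 := M.rk_mono hU (Finset.Subset.refl _)
    have h3 : M.rk M.E - M.rk X - (M.rk (A ∪ X) - M.rk X) = M.rk M.E - M.rk (A ∪ X) := by omega
    rw [h3, Finset.card_union_of_disjoint
      (Finset.disjoint_of_subset_left hA Finset.sdiff_disjoint), ← mul_assoc, ← pow_add]
    congr 1
    rw [show X.card + (A.card + X.card) = A.card + 2 * X.card by ring, pow_add, pow_mul]
    simp

theorem dual_rewrite {α R : Type*} [DecidableEq α] [CommRing R] (M : FinMatroid α)
    (X : Finset α) (hX : X ⊆ M.E) (l : R) :
    charPoly X (fun A => A.card + M.rk (X \ A) - M.rk X) (X.card - M.rk X) l =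
    (-1) ^ X.card * ∑ C ∈ X.powerset, (-1) ^ C.card * l ^ (C.card - M.rk C) := by
  unfold charPoly
  rw [Finset.mul_sum]
  refine Finset.sum_bij' (fun A _ => X \ A) (fun A _ => X \ A) ?_ ?_ ?_ ?_ ?_
  · intro A _
    simp
  · intro A _
    simp
  · intro A hA
    simpa using hA
  · intro A hA
    simpa using hA
  · intro A hA
    rw [Finset.mem_powerset] at hA
    have hC : X \ A ⊆ M.E := Finset.sdiff_subset.trans hX
    have h1 := M.rk_submod hC (hA.trans hX)
    have h2 := M.rk_le_card A (hA.trans hX)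
    have h3 := M.rk_le_card _ hC
    have h4 := Finset.card_sdiff_add_card_eq_card hA
    rw [Finset.sdiff_union_of_subset hA] at h1
    have h5 : X.card - M.rk X - (A.card + M.rk (X \ A) - M.rk X)
      = (X \ A).card - M.rk (X \ A) := by omega
    rw [h5, ← mul_assoc, ← pow_add]
    congr 1
    rw [← h4, show (X \ A).card + A.card + (X \ A).card = A.card + 2 * (X \ A).card by ring,
      pow_add, pow_mul]
    simp

/-- Identity 8: the KRSEV identity expressing the rank generating polynomial as a
weighted convolution of characteristic polynomials over cyclic flats.  The dual
`(M|X)⊥` is encoded by ground set `X` with rank function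
`A ↦ |A| + rk (X \\ A) - rk X` and rank `|X| - rk X`. -/
theorem rank_generating_dual_char_convolution {α R : Type*} [DecidableEq α] [CommRing R]
    (M : FinMatroid α) (x ξ : R) :
    (-1 : R) ^ (M.rk M.E) * RG M.E M.rk (M.rk M.E) (-x) (-ξ) =
      ∑ X ∈ M.E.powerset.filter (fun X =>
          (∀ e ∈ M.E \ X, M.rk X < M.rk (insert e X)) ∧
          (∀ e ∈ X, M.rk (X.erase e) = M.rk X)),
        (-1 : R) ^ X.card *
          charPoly X (fun A => A.card + M.rk (X \ A) - M.rk X) (X.card - M.rk X) x *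
          charPoly (M.E \ X) (fun A => M.rk (A ∪ X) - M.rk X) (M.rk M.E - M.rk X) ξ := by
  rw [Finset.sum_filter_of_ne]
  · have h1 : ∀ X ∈ M.E.powerset, (-1 : R) ^ X.card *
          charPoly X (fun A => A.card + M.rk (X \ A) - M.rk X) (X.card - M.rk X) x *
          charPoly (M.E \ X) (fun A => M.rk (A ∪ X) - M.rk X) (M.rk M.E - M.rk X) ξ =
        (-1 : R) ^ X.card * (∑ C ∈ X.powerset, (-1) ^ C.card * x ^ (C.card - M.rk C)) *
        (∑ D ∈ M.E.powerset with X ⊆ D, (-1) ^ D.card * ξ ^ (M.rk M.E - M.rk D)) := by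
      intro X hX
      rw [Finset.mem_powerset] at hX
      rw [dual_rewrite M X hX, contract_rewrite M X hX]
      have : (-1 : R) ^ X.card * (-1) ^ X.card = 1 := by
        rw [← mul_pow]; simp
      linear_combination ((-1 : R) ^ X.card *
        (∑ C ∈ X.powerset, (-1) ^ C.card * x ^ (C.card - M.rk C)) *
        (∑ D ∈ M.E.powerset with X ⊆ D, (-1) ^ D.card * ξ ^ (M.rk M.E - M.rk D))) * this
    rw [Finset.sum_congr rfl h1, convolution_collapse, RG, Finset.mul_sum]
    refine Finset.sum_congr rfl fun A hA => ?_
    rw [Finset.mem_powerset] at hA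
    obtain ⟨a, ha⟩ := Nat.exists_eq_add_of_le (M.rk_le_card A hA)
    obtain ⟨b, hb⟩ := Nat.exists_eq_add_of_le (M.rk_mono hA (Finset.Subset.refl _))
    rw [ha, hb, Nat.add_sub_cancel_left, Nat.add_sub_cancel_left, neg_pow x, neg_pow ξ]
    have e1 : ∀ n : ℕ, (-1 : R) ^ n * (-1) ^ n = 1 := by
      intro n; rw [← mul_pow]; simp
    simp only [pow_add]
    have ea := e1 a
    have eb := e1 b
    have ec := e1 (M.rk A)
    generalize (-1 : R) ^ a = u at *
    generalize (-1 : R) ^ b = v at *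
    generalize (-1 : R) ^ (M.rk A) = w at *
    linear_combination w * u * x ^ a * ξ ^ b * (eb - w * w * ea - ec)
  · intro X hX hne
    rw [Finset.mem_powerset] at hX
    constructor
    · intro e he
      by_contra hlt
      exact hne (by rw [contract_vanish M X hX e he (not_lt.1 hlt), mul_zero])
    · intro e he
      by_contra hlt
      exact hne (by rw [dual_vanish M X hX e he hlt, mul_zero, zero_mul])
end

section
/- Let M be a finite matroid of rank r on ground set E. For all commuting variables λ and ξ (equivalently, for all elements of any commutative ring), χ(M; λ·ξ) = ∑_{X flat of M} λ^{r − rk(X)} · χ(M|X; λ) · χ(M/X; ξ), where the sum ranges over all flats (closed sets) X of M. -/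
open Finset

theorem cpm_icc_sum {α R : Type*} [DecidableEq α] [CommRing R] (A B : Finset α) (f : Finset α → R)
    (h : A ⊆ B) : ∑ X ∈ Finset.Icc A B, f X = ∑ C ∈ (B \ A).powerset, f (C ∪ A) := by
  symm
  refine Finset.sum_nbij' (fun C => C ∪ A) (fun X => X \ A) ?_ ?_ ?_ ?_ ?_
  · intro C hC
    rw [Finset.mem_powerset] at hC
    rw [Finset.mem_Icc]
    exact ⟨Finset.subset_union_right,
      Finset.union_subset (hC.trans Finset.sdiff_subset) h⟩
  · intro X hX
    rw [Finset.mem_Icc] at hX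
    rw [Finset.mem_powerset]
    exact Finset.sdiff_subset_sdiff hX.2 (Finset.Subset.refl _)
  · intro C hC
    rw [Finset.mem_powerset] at hC
    ext x
    have := @hC x
    simp only [Finset.mem_sdiff, Finset.mem_union] at *
    tauto
  · intro X hX
    rw [Finset.mem_Icc] at hX
    exact Finset.sdiff_union_of_subset hX.1
  · intro C _
    rfl

theorem cpm_alt {α R : Type*} [DecidableEq α] [CommRing R] (A B : Finset α) (h : A ⊆ B) :
    ∑ X ∈ Finset.Icc A B, (-1 : R) ^ X.card = if A = B then (-1) ^ A.card else 0 := by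
  split_ifs with hAB
  · subst hAB
    simp
  · rw [cpm_icc_sum A B _ h]
    obtain ⟨e, he⟩ : (B \ A).Nonempty := by
      rw [Finset.sdiff_nonempty]
      exact fun h' => hAB (Finset.Subset.antisymm h h')
    rw [← Finset.insert_erase he, Finset.sum_powerset_insert (Finset.notMem_erase _ _),
      ← Finset.sum_add_distrib]
    refine Finset.sum_eq_zero fun t ht => ?_
    rw [Finset.mem_powerset] at ht
    have h1 : e ∉ t ∪ A := by
      have h2 := @ht e
      simp only [Finset.mem_sdiff, Finset.mem_union, Finset.mem_erase] at *
      tauto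
    rw [Finset.insert_union, Finset.card_insert_of_notMem h1, pow_succ]
    ring

theorem cpm_loop {α R : Type*} [DecidableEq α] [CommRing R] (M : FinMatroid α) (ξ : R)
    (X : Finset α) (s : ℕ) (hX : X ⊆ M.E) (e : α) (he : e ∈ M.E \ X)
    (hr : M.rk (insert e X) ≤ M.rk X) :
    charPoly (M.E \ X) (fun A => M.rk (A ∪ X) - M.rk X) s ξ = 0 := by
  unfold charPoly
  rw [← Finset.insert_erase he, Finset.sum_powerset_insert (Finset.notMem_erase _ _),
    ← Finset.sum_add_distrib]
  refine Finset.sum_eq_zero fun t ht => ?_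
  rw [Finset.mem_powerset] at ht
  have h1 : e ∉ t := fun h => Finset.notMem_erase _ _ (ht h)
  have heE : e ∈ M.E := (Finset.mem_sdiff.1 he).1
  have htE : t ∪ X ⊆ M.E :=
    Finset.union_subset ((ht.trans (Finset.erase_subset _ _)).trans Finset.sdiff_subset) hX
  have hiE : insert e X ⊆ M.E := Finset.insert_subset heE hX
  have hs := M.rk_submod htE hiE
  have hu : (t ∪ X) ∪ insert e X = insert e t ∪ X := by
    ext x
    simp only [Finset.mem_union, Finset.mem_insert]
    tauto
  have hm : M.rk X ≤ M.rk ((t ∪ X) ∩ insert e X) :=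
    M.rk_mono (Finset.subset_inter Finset.subset_union_right (Finset.subset_insert _ _))
      (Finset.inter_subset_left.trans htE)
  have hiu : insert e t ∪ X ⊆ M.E := hu ▸ Finset.union_subset htE hiE
  have hm2 : M.rk (t ∪ X) ≤ M.rk (insert e t ∪ X) :=
    M.rk_mono (Finset.union_subset_union (Finset.subset_insert _ _) (Finset.Subset.refl _)) hiu
  rw [hu] at hs
  have heq : M.rk (insert e t ∪ X) = M.rk (t ∪ X) := by omega
  beta_reduce
  rw [Finset.card_insert_of_notMem h1, heq, pow_succ]
  ring

theorem cpm_contract {α R : Type*} [DecidableEq α] [CommRing R] (M : FinMatroid α) (ξ : R)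
    (X : Finset α) (hX : X ⊆ M.E) :
    charPoly (M.E \ X) (fun A => M.rk (A ∪ X) - M.rk X) (M.rk M.E - M.rk X) ξ =
      ∑ B ∈ Finset.Icc X M.E, (-1 : R) ^ B.card * (-1) ^ X.card * ξ ^ (M.rk M.E - M.rk B) := by
  rw [cpm_icc_sum X M.E _ hX]
  unfold charPoly
  refine Finset.sum_congr rfl fun C hC => ?_
  rw [Finset.mem_powerset] at hC
  have hd : Disjoint C X := Finset.disjoint_of_subset_left hC Finset.sdiff_disjoint
  have h1 : M.rk X ≤ M.rk (C ∪ X) := M.rk_mono Finset.subset_union_right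
    (Finset.union_subset (hC.trans Finset.sdiff_subset) hX)
  have h2 : M.rk M.E - M.rk X - (M.rk (C ∪ X) - M.rk X) = M.rk M.E - M.rk (C ∪ X) := by omega
  have h3 : (-1 : R) ^ X.card * (-1) ^ X.card = 1 := by
    rw [← mul_pow]
    simp
  simp only []
  rw [h2, Finset.card_union_of_disjoint hd, pow_add, mul_assoc ((-1 : R) ^ C.card), h3, mul_one]

/-- Identity 9: the multiplication identity for the characteristic polynomial. -/
theorem char_poly_multiplication {α R : Type*} [DecidableEq α] [CommRing R]
    (M : FinMatroid α) (l ξ : R) :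
    charPoly M.E M.rk (M.rk M.E) (l * ξ) =
      ∑ X ∈ M.E.powerset.filter (fun X => ∀ e ∈ M.E \ X, M.rk X < M.rk (insert e X)),
        l ^ (M.rk M.E - M.rk X) * charPoly X M.rk (M.rk X) l *
          charPoly (M.E \ X) (fun A => M.rk (A ∪ X) - M.rk X) (M.rk M.E - M.rk X) ξ := by
  have key : ∀ X ∈ M.E.powerset,
      l ^ (M.rk M.E - M.rk X) * charPoly X M.rk (M.rk X) l *
          charPoly (M.E \ X) (fun A => M.rk (A ∪ X) - M.rk X) (M.rk M.E - M.rk X) ξ =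
      ∑ A ∈ X.powerset, ∑ B ∈ Finset.Icc X M.E,
        ((-1 : R) ^ A.card * l ^ (M.rk M.E - M.rk A) *
          ((-1 : R) ^ B.card * ξ ^ (M.rk M.E - M.rk B))) * (-1) ^ X.card := by
    intro X hX
    rw [Finset.mem_powerset] at hX
    rw [cpm_contract M ξ X hX]
    unfold charPoly
    rw [Finset.mul_sum X.powerset, Finset.sum_mul_sum]
    refine Finset.sum_congr rfl fun A hA => Finset.sum_congr rfl fun B hB => ?_
    rw [Finset.mem_powerset] at hA
    have h1 := M.rk_mono hA hX
    have h2 := M.rk_mono hX (Finset.Subset.refl _)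
    have h3 : M.rk M.E - M.rk A = (M.rk M.E - M.rk X) + (M.rk X - M.rk A) := by omega
    rw [h3, pow_add]
    ring
  have hfil : ∑ X ∈ M.E.powerset.filter (fun X => ∀ e ∈ M.E \ X, M.rk X < M.rk (insert e X)),
        l ^ (M.rk M.E - M.rk X) * charPoly X M.rk (M.rk X) l *
          charPoly (M.E \ X) (fun A => M.rk (A ∪ X) - M.rk X) (M.rk M.E - M.rk X) ξ =
      ∑ X ∈ M.E.powerset, l ^ (M.rk M.E - M.rk X) * charPoly X M.rk (M.rk X) l *
          charPoly (M.E \ X) (fun A => M.rk (A ∪ X) - M.rk X) (M.rk M.E - M.rk X) ξ := by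
    refine Finset.sum_subset (Finset.filter_subset _ _) fun X hX hn => ?_
    rw [Finset.mem_filter, not_and] at hn
    have hn' := hn hX
    push Not at hn'
    obtain ⟨e, he, hr⟩ := hn'
    rw [cpm_loop M ξ X _ (Finset.mem_powerset.1 hX) e he hr, mul_zero]
  rw [hfil, Finset.sum_congr rfl key]
  rw [Finset.sum_comm' (t' := M.E.powerset) (s' := fun A => Finset.Icc A M.E)
    (by
      intro X A
      simp only [Finset.mem_powerset, Finset.mem_Icc]
      constructor
      · rintro ⟨h1, h2⟩
        exact ⟨⟨h2, h1⟩, h2.trans h1⟩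
      · rintro ⟨⟨h2, h1⟩, _⟩
        exact ⟨h1, h2⟩)]
  unfold charPoly
  refine Finset.sum_congr rfl fun A hA => ?_
  rw [Finset.mem_powerset] at hA
  rw [Finset.sum_comm' (t' := Finset.Icc A M.E) (s' := fun B => Finset.Icc A B)
    (by
      intro X B
      simp only [Finset.mem_Icc]
      constructor
      · rintro ⟨⟨h1, h2⟩, h3, h4⟩
        exact ⟨⟨h1, h3⟩, h1.trans h3, h4⟩
      · rintro ⟨⟨h1, h2⟩, h3, h4⟩
        exact ⟨⟨h1, h2.trans h4⟩, h2, h4⟩)]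
  rw [Finset.sum_eq_single A]
  · rw [← Finset.mul_sum, cpm_alt A A (Finset.Subset.refl _), if_pos rfl, mul_pow]
    have h3 : (-1 : R) ^ A.card * (-1) ^ A.card = 1 := by
      rw [← mul_pow]
      simp
    linear_combination (-(-1 : R) ^ A.card * l ^ (M.rk M.E - M.rk A) *
      ξ ^ (M.rk M.E - M.rk A)) * h3
  · intro B hB hne
    rw [← Finset.mul_sum, cpm_alt A B (Finset.mem_Icc.1 hB).1, if_neg (Ne.symm hne), mul_zero]
  · intro h
    exact absurd (Finset.mem_Icc.2 ⟨Finset.Subset.refl _, hA⟩) h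
end

section
/- Let M be a finite matroid of rank r on ground set E, and let (p_e)_{e∈E} be real numbers with p_e ≠ 1 for all e. Then for every real number ξ, ∑_{T ⊆ E} (∏_{e∈T} p_e) · (∏_{e∈E∖T} (1 − p_e)) · χ(M/T; ξ) = (∏_{e∈E} (1 − p_e)) · SC(M; (p_e/(1 − p_e) − 1)_{e∈E}, ξ). In words: the expected value of the characteristic polynomial χ(H; ξ) of a random contraction H = M/T, where T is formed by including each element e independently with probability p_e, equals (∏_{e∈E}(1−p_e)) · SC(M; (p/(1−p)) − 1, ξ). -/
open Finset

/-- The expected value of the characteristic polynomial of a random contraction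
`M/T`, where each element `e` is put in `T` independently with probability `p e`,
equals `(∏_{e ∈ E} (1 - p e)) · SC(M; p/(1-p) - 1, ξ)`. -/
theorem expected_char_poly_random_contraction {α : Type*} [DecidableEq α]
    (M : FinMatroid α) (p : α → ℝ) (hp : ∀ e ∈ M.E, p e ≠ 1) (ξ : ℝ) :
    ∑ T ∈ M.E.powerset,
        (∏ e ∈ T, p e) * (∏ e ∈ M.E \ T, (1 - p e)) *
          charPoly (M.E \ T) (fun A => M.rk (A ∪ T) - M.rk T) (M.rk M.E - M.rk T) ξ =
      (∏ e ∈ M.E, (1 - p e)) *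
        SC M.E M.rk (M.rk M.E) (fun e => p e / (1 - p e) - 1) ξ := by
  unfold charPoly SC
  have hw : ∀ T ∈ M.E.powerset, (∏ e ∈ T, p e) * (∏ e ∈ M.E \ T, (1 - p e)) =
      (∏ e ∈ M.E, (1 - p e)) * ∏ e ∈ T, (p e / (1 - p e)) := by
    intro T hT
    have hT' := Finset.mem_powerset.1 hT
    rw [← Finset.prod_sdiff hT', mul_assoc, ← Finset.prod_mul_distrib, mul_comm]
    congr 1
    refine Finset.prod_congr rfl fun e he => ?_
    have : 1 - p e ≠ 0 := sub_ne_zero.2 (hp e (hT' he)).symm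
    field_simp
  have hx : ∀ A : Finset α, ∏ e ∈ A, (p e / (1 - p e) - 1) =
      ∑ T ∈ A.powerset, (∏ e ∈ T, (p e / (1 - p e))) * (-1 : ℝ) ^ (A \ T).card := by
    intro A
    simp only [sub_eq_add_neg _ (1 : ℝ)]
    rw [Finset.prod_add]
    simp [sub_eq_add_neg]
  rw [Finset.sum_congr rfl fun T hT => by rw [hw T hT, mul_assoc], ← Finset.mul_sum]
  congr 1
  simp only [hx, Finset.mul_sum, Finset.sum_mul]
  rw [Finset.sum_sigma', Finset.sum_sigma']
  refine Finset.sum_bij' (fun x _ => ⟨x.2 ∪ x.1, x.1⟩) (fun x _ => ⟨x.2, x.1 \ x.2⟩) ?_ ?_ ?_ ?_ ?_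
  · rintro ⟨T, B⟩ h
    simp only [Finset.mem_sigma, Finset.mem_powerset] at h ⊢
    exact ⟨Finset.union_subset (h.2.trans Finset.sdiff_subset) h.1, Finset.subset_union_right⟩
  · rintro ⟨A, T⟩ h
    simp only [Finset.mem_sigma, Finset.mem_powerset] at h ⊢
    exact ⟨h.2.trans h.1, Finset.sdiff_subset_sdiff h.1 subset_rfl⟩
  · rintro ⟨T, B⟩ h
    simp only [Finset.mem_sigma, Finset.mem_powerset] at h
    have hd : Disjoint B T := Finset.disjoint_of_subset_left h.2 Finset.sdiff_disjoint
    simp only [Finset.union_sdiff_cancel_right hd]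
  · rintro ⟨A, T⟩ h
    simp only [Finset.mem_sigma, Finset.mem_powerset] at h
    simp only [Finset.sdiff_union_of_subset h.2]
  · rintro ⟨T, B⟩ h
    simp only [Finset.mem_sigma, Finset.mem_powerset] at h
    have hd : Disjoint B T := Finset.disjoint_of_subset_left h.2 Finset.sdiff_disjoint
    have h1 : M.rk T ≤ M.rk (B ∪ T) := M.rk_mono Finset.subset_union_right
      (Finset.union_subset (h.2.trans Finset.sdiff_subset) h.1)
    have h2 : M.rk M.E - M.rk T - (M.rk (B ∪ T) - M.rk T) = M.rk M.E - M.rk (B ∪ T) := by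
      omega
    simp only [Finset.union_sdiff_cancel_right hd, h2, mul_assoc]
end

section
/- Let q be a prime power, let F be a finite field with q elements, let d ≥ 0, and let V = F^d (a finite set of q^d vectors). Then for all real (or commuting-variable) x and λ, ∑_{A ⊆ V} x^{|A|} · λ^{d − dim span(A)} = ∑_{j=0}^{d} g_j(d,q) · (x + 1)^{q^j} · ∏_{i=0}^{d−j−1} (λ − q^i), where dim span(A) is the dimension of the linear span of A in F^d and g_j(d,q) is the number of j-dimensional linear subspaces of F^d (the Gaussian binomial coefficient binom(d,j)_q). In matroid language, this computes the size-corank polynomial SC(GF(q)^d; x, λ) of the matroid of all vectors of GF(q)^d. -/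
open Finset Classical

lemma card_inj_maps {F E : Type*} [Field F] [Fintype F] [AddCommGroup E] [Module F E]
    [Module.Finite F E] (m : ℕ) :
    (Nat.card {g : E →ₗ[F] (Fin m → F) // LinearMap.ker g = ⊥} : ℝ) =
      ∏ i ∈ range (Module.finrank F E),
        (((Fintype.card F : ℝ) ^ m) - (Fintype.card F : ℝ) ^ i) := by
  have b := Module.finBasis F E
  have e : {g : E →ₗ[F] (Fin m → F) // LinearMap.ker g = ⊥} ≃
      {s : Fin (Module.finrank F E) → (Fin m → F) // LinearIndependent F s} := by
    refine (b.constr F).symm.toEquiv.subtypeEquiv ?_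
    intro g
    have h : (b.constr F).symm.toEquiv g = g ∘ b := by
      ext i; simp [Module.Basis.constr]
    rw [h]
    constructor
    · intro hg
      exact b.linearIndependent.map' g hg
    · intro hl
      rw [LinearMap.ker_eq_bot']
      intro y hy
      rw [← b.sum_repr y, map_sum] at hy
      simp only [map_smul] at hy
      have h0 := Fintype.linearIndependent_iff.1 hl _ hy
      rw [← b.sum_repr y]
      simp [h0]
  rw [Nat.card_congr e]
  by_cases hk : Module.finrank F E ≤ m
  · have := card_linearIndependent (K := F) (V := Fin m → F) (k := Module.finrank F E)
      (by simpa using hk)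
    rw [this, ← Fin.prod_univ_eq_prod_range (fun i => ((Fintype.card F : ℝ) ^ m) - (Fintype.card F : ℝ) ^ i)]
    push_cast
    refine Finset.prod_congr rfl fun i _ => ?_
    rw [Nat.cast_sub]
    · simp
    · apply Nat.pow_le_pow_right Fintype.card_pos
      simp; omega
  · have : IsEmpty {s : Fin (Module.finrank F E) → (Fin m → F) // LinearIndependent F s} := by
      constructor
      rintro ⟨s, hs⟩
      have := hs.fintype_card_le_finrank
      simp at this
      exact hk this
    rw [Nat.card_of_isEmpty]
    symm
    push_cast
    exact Finset.prod_eq_zero (i := m) (by simp; omega) (by simp)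

noncomputable def quotMapsEquiv {F V M : Type*} [Field F] [AddCommGroup V] [Module F V]
    [AddCommGroup M] [Module F M] (U : Submodule F V) :
    {f : V →ₗ[F] M // U ≤ LinearMap.ker f} ≃ ((V ⧸ U) →ₗ[F] M) where
  toFun f := U.liftQ f.1 f.2
  invFun g := ⟨g.comp U.mkQ, by intro y hy; simp [(Submodule.Quotient.mk_eq_zero U).2 hy]⟩
  left_inv f := by ext; simp
  right_inv g := by ext; simp

noncomputable def quotInjEquiv {F V M : Type*} [Field F] [AddCommGroup V] [Module F V]
    [AddCommGroup M] [Module F M] (U : Submodule F V) :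
    {f : V →ₗ[F] M // LinearMap.ker f = U} ≃
      {g : (V ⧸ U) →ₗ[F] M // LinearMap.ker g = ⊥} where
  toFun f := ⟨U.liftQ f.1 f.2.ge, Submodule.ker_liftQ_eq_bot _ _ _ f.2.le⟩
  invFun g := ⟨g.1.comp U.mkQ, by rw [LinearMap.ker_comp, g.2]; simp⟩
  left_inv f := by ext; simp
  right_inv g := by ext; simp

lemma sum_above_nat {F : Type*} [Field F] [Fintype F] (d : ℕ)
    (U : Submodule F (Fin d → F)) (m : ℕ) :
    ∑ W : Submodule F (Fin d → F) with U ≤ W,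
      ∏ i ∈ range (d - Module.finrank F W),
        (((Fintype.card F : ℝ) ^ m) - (Fintype.card F : ℝ) ^ i) =
      ((Fintype.card F : ℝ) ^ m) ^ (d - Module.finrank F U) := by
  have hfin : ∀ W : Submodule F (Fin d → F),
      Module.finrank F ((Fin d → F) ⧸ W) = d - Module.finrank F W := by
    intro W
    have := W.finrank_quotient_add_finrank
    simp at this
    omega
  have : Finite ((Fin d → F) →ₗ[F] (Fin m → F)) := Module.finite_of_finite F
  have : Fintype ((Fin d → F) →ₗ[F] (Fin m → F)) := Fintype.ofFinite _
  have h1 := Finset.card_eq_sum_card_fiberwise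
    (s := (univ : Finset ((Fin d → F) →ₗ[F] (Fin m → F))).filter (fun f => U ≤ LinearMap.ker f))
    (t := (univ : Finset (Submodule F (Fin d → F))).filter (fun W => U ≤ W))
    (f := fun f => LinearMap.ker f) (by intro f hf; simpa using hf)
  have h2 : (#((univ : Finset ((Fin d → F) →ₗ[F] (Fin m → F))).filter
      (fun f => U ≤ LinearMap.ker f)) : ℝ) =
      ((Fintype.card F : ℝ) ^ m) ^ (d - Module.finrank F U) := by
    rw [← Fintype.card_subtype, ← Nat.card_eq_fintype_card, Nat.card_congr (quotMapsEquiv U),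
      Module.natCard_eq_pow_finrank (K := F), Module.finrank_linearMap, hfin]
    simp [← pow_mul, mul_comm]
  rw [← h2, h1]
  push_cast
  refine Finset.sum_congr rfl fun W hW => ?_
  rw [← hfin, ← card_inj_maps, ← Nat.card_congr (quotInjEquiv W), Nat.card_eq_fintype_card,
    Fintype.card_subtype, Finset.filter_filter]
  congr 2
  ext f
  simp only [mem_filter, mem_univ, true_and] at hW ⊢
  exact ⟨fun h => ⟨h ▸ hW, h⟩, fun h => h.2⟩

lemma sum_above {F : Type*} [Field F] [Fintype F] (d : ℕ)
    (U : Submodule F (Fin d → F)) (l : ℝ) :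
    ∑ W : Submodule F (Fin d → F) with U ≤ W,
      ∏ i ∈ range (d - Module.finrank F W), (l - (Fintype.card F : ℝ) ^ i) =
      l ^ (d - Module.finrank F U) := by
  have key : (∑ W : Submodule F (Fin d → F) with U ≤ W,
      ∏ i ∈ range (d - Module.finrank F W),
        (Polynomial.X - Polynomial.C ((Fintype.card F : ℝ) ^ i))) =
      (Polynomial.X : Polynomial ℝ) ^ (d - Module.finrank F U) := by
    apply Polynomial.eq_of_infinite_eval_eq
    have hinj : Function.Injective (fun m : ℕ => (Fintype.card F : ℝ) ^ m) :=
      pow_right_injective₀ (by exact_mod_cast Fintype.card_pos)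
        (by exact_mod_cast (Fintype.one_lt_card (α := F)).ne')
    refine (Set.infinite_range_of_injective hinj).mono ?_
    rintro _ ⟨m, rfl⟩
    have := sum_above_nat d U m
    simpa [Polynomial.eval_finsetSum, Polynomial.eval_prod] using this
  have := congrArg (Polynomial.eval l) key
  simpa [Polynomial.eval_finsetSum, Polynomial.eval_prod] using this

/-- The size-corank polynomial of the matroid `GF(q)^d` of all vectors of a
`d`-dimensional vector space over a field with `q` elements, expressed as a sum over
dimensions of subspaces, with `g_j(d,q)` the number of `j`-dimensional subspaces. -/
theorem size_corank_vector_space (q : ℕ) (hq : IsPrimePow q) (F : Type*) [Field F]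
    [Fintype F] (hF : Fintype.card F = q) (d : ℕ) (x l : ℝ) :
    ∑ A ∈ (Finset.univ : Finset (Fin d → F)).powerset,
        x ^ A.card *
          l ^ (d - Module.finrank F (Submodule.span F (A : Set (Fin d → F)))) =
      ∑ j ∈ Finset.range (d + 1),
        (Nat.card {W : Submodule F (Fin d → F) // Module.finrank F W = j} : ℝ) *
          (x + 1) ^ q ^ j * ∏ i ∈ Finset.range (d - j), (l - (q : ℝ) ^ i) := by
  subst hF
  have hR : ∑ j ∈ Finset.range (d + 1),
        (Nat.card {W : Submodule F (Fin d → F) // Module.finrank F W = j} : ℝ) *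
          (x + 1) ^ (Fintype.card F) ^ j *
            ∏ i ∈ Finset.range (d - j), (l - (Fintype.card F : ℝ) ^ i) =
      ∑ W : Submodule F (Fin d → F), (x + 1) ^ (Fintype.card F) ^ (Module.finrank F W) *
        ∏ i ∈ Finset.range (d - Module.finrank F W), (l - (Fintype.card F : ℝ) ^ i) := by
    rw [← Finset.sum_fiberwise_of_maps_to (s := univ) (t := range (d + 1))
      (g := fun W : Submodule F (Fin d → F) => Module.finrank F W)]
    · refine Finset.sum_congr rfl fun j _ => ?_
      rw [Finset.sum_congr rfl (g := fun _ => (x + 1) ^ (Fintype.card F) ^ j *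
        ∏ i ∈ Finset.range (d - j), (l - (Fintype.card F : ℝ) ^ i))]
      · rw [Finset.sum_const, nsmul_eq_mul, Nat.card_eq_fintype_card, Fintype.card_subtype,
          mul_assoc]
      · intro W hW
        rw [(mem_filter.1 hW).2]
    · intro W _
      have := W.finrank_le
      simp at this
      simp; omega
  have hW : ∀ W : Submodule F (Fin d → F), (x + 1) ^ (Fintype.card F) ^ (Module.finrank F W) =
      ∑ A ∈ (univ : Finset (Fin d → F)).powerset.filter
        (fun A : Finset (Fin d → F) => Submodule.span F (A : Set (Fin d → F)) ≤ W), x ^ #A := by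
    intro W
    have h1 := Finset.sum_pow_mul_eq_add_pow x 1 ((W : Set (Fin d → F)).toFinset)
    have h2 : #((W : Set (Fin d → F)).toFinset) = Fintype.card F ^ Module.finrank F W := by
      rw [Set.toFinset_card, ← Nat.card_eq_fintype_card, ← Nat.card_eq_fintype_card]
      exact Module.natCard_eq_pow_finrank (K := F) (V := W)
    rw [← h2, ← h1]
    simp only [one_pow, mul_one]
    refine Finset.sum_congr ?_ fun _ _ => rfl
    ext A
    simp [Submodule.span_le, Finset.subset_iff, Set.subset_def]
  rw [hR]
  simp_rw [hW, Finset.sum_mul, Finset.sum_filter]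
  rw [Finset.sum_comm]
  refine Finset.sum_congr rfl fun A _ => ?_
  rw [← sum_above, Finset.mul_sum, Finset.sum_filter]
end

section
/- Let q be a prime power, let F be a finite field with q elements, let d ≥ 0, and let V = F^d. Then for every real number p, ∑_{A ⊆ V, span(A) = F^d} p^{|A|} = ∑_{k=0}^{d} (−1)^k · g_k(d,q) · q^{k(k−1)/2} · (1 + p)^{q^{d−k}}, where the left-hand sum ranges over all subsets A of F^d whose linear span is all of F^d, and g_k(d,q) is the number of k-dimensional linear subspaces of F^d. In particular, for 0 ≤ p ≤ 1 this is the expected number of spanning subsets contained in a random subset of F^d obtained by including each vector independently with probability p. -/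
open Finset Classical

lemma card_compl_line {F V : Type*} [Field F] [Fintype F] [AddCommGroup V] [Module F V]
    [FiniteDimensional F V] (p : Submodule F V) (hp : Module.finrank F p = 1) :
    Nat.card {u : Submodule F V // IsCompl p u} =
      Fintype.card F ^ (Module.finrank F V - 1) := by
  obtain ⟨c, hc⟩ := Submodule.exists_isCompl p
  obtain ⟨f0, hf0⟩ := p.isComplEquivProj ⟨c, hc⟩
  let R : (V →ₗ[F] p) →ₗ[F] (p →ₗ[F] p) := LinearMap.lcomp F p p.subtype
  have hR : LinearMap.range R = ⊤ := by
    rw [LinearMap.range_eq_top]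
    intro g
    refine ⟨g ∘ₗ f0, ?_⟩
    ext x
    simp [R, hf0]
  have h1 := LinearMap.finrank_range_add_finrank_ker R
  rw [hR, finrank_top, Module.finrank_linearMap, Module.finrank_linearMap, hp] at h1
  have e : {f : V →ₗ[F] p // ∀ x : p, f x = x} ≃ LinearMap.ker R :=
    { toFun := fun f => ⟨f.1 - f0, by
        rw [LinearMap.mem_ker]; ext x; simp [R, hf0, f.2]⟩
      invFun := fun g => ⟨g.1 + f0, fun x => by
        have this : g.1 x = 0 := LinearMap.congr_fun (LinearMap.mem_ker.1 g.2) x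
        simp [hf0, this]⟩
      left_inv := fun f => by ext; simp
      right_inv := fun f => by ext; simp }
  rw [Nat.card_congr (p.isComplEquivProj.trans e), Module.natCard_eq_pow_finrank (K := F),
    Nat.card_eq_fintype_card]
  congr 1
  omega

lemma card_fibre {F V : Type*} [Field F] [Fintype F] [AddCommGroup V] [Module F V]
    [FiniteDimensional F V] (v : V) (hv : v ≠ 0) (W : Submodule F V) (hvW : v ∈ W) :
    Nat.card {u : Submodule F V // v ∉ u ∧ u ⊔ Submodule.span F {v} = W} =
      Fintype.card F ^ (Module.finrank F W - 1) := by
  have hv' : (⟨v, hvW⟩ : W) ≠ 0 := by simpa using hv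
  rw [← card_compl_line (Submodule.span F {(⟨v, hvW⟩ : W)}) (finrank_span_singleton hv')]
  symm
  have hm : (Submodule.span F {(⟨v, hvW⟩ : W)}).map W.subtype = Submodule.span F {v} := by
    simp [Submodule.map_span]
  have key : ∀ u : Submodule F W, IsCompl (Submodule.span F {(⟨v, hvW⟩ : W)}) u ↔
      v ∉ u.map W.subtype ∧ u.map W.subtype ⊔ Submodule.span F {v} = W := by
    intro u
    rw [W.mapIic.isCompl_iff, Set.Iic.isCompl_iff, Submodule.coe_mapIic_apply,
      Submodule.coe_mapIic_apply, hm, disjoint_comm, Submodule.disjoint_span_singleton' hv,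
      sup_comm]
  refine Nat.card_congr
    { toFun := fun u => ⟨u.1.map W.subtype, (key _).1 u.2⟩
      invFun := fun u => ⟨u.1.comap W.subtype, (key _).2 (by
        have : u.1 ≤ W := le_sup_left.trans u.2.2.le
        rw [Submodule.map_comap_subtype, inf_eq_right.2 this]
        exact u.2)⟩
      left_inv := fun u => by
        ext1
        exact Submodule.comap_map_eq_of_injective W.injective_subtype _
      right_inv := fun u => by
        have : u.1 ≤ W := le_sup_left.trans u.2.2.le
        ext1
        simp [Submodule.map_comap_subtype, this] }

lemma sum_weight {F V : Type*} [Field F] [Fintype F] [AddCommGroup V] [Module F V]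
    [FiniteDimensional F V] [Fintype (Submodule F V)] (T : Submodule F V) :
    ∑ U : Submodule F V with U ≤ T, (-1 : ℝ) ^ Module.finrank F U *
      (Fintype.card F : ℝ) ^ (Module.finrank F U).choose 2 = if T = ⊥ then 1 else 0 := by
  split_ifs with hT
  · subst hT
    have : (Finset.univ.filter fun U : Submodule F V => U ≤ ⊥) = {⊥} := by ext; simp
    rw [this]; simp
  obtain ⟨v, hvT, hv⟩ := Submodule.exists_mem_ne_zero_of_ne_bot hT
  rw [← Finset.sum_filter_add_sum_filter_not _ (fun U => v ∈ U)]
  rw [← Finset.sum_fiberwise_of_maps_to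
    (s := (Finset.univ.filter fun U : Submodule F V => U ≤ T).filter fun U => ¬ v ∈ U)
    (t := (Finset.univ.filter fun U : Submodule F V => U ≤ T).filter fun U => v ∈ U)
    (g := fun U => U ⊔ Submodule.span F {v})]
  · rw [← Finset.sum_add_distrib]
    apply Finset.sum_eq_zero
    intro W hW
    simp only [Finset.mem_filter, Finset.mem_univ, true_and] at hW
    have hs : Submodule.span F {v} ≤ W := by simpa using hW.2
    have hfin : 1 ≤ Module.finrank F W := by
      rw [← finrank_span_singleton (K := F) hv]; exact Submodule.finrank_mono hs
    obtain ⟨k, hk⟩ : ∃ k, Module.finrank F W = k + 1 := ⟨_, (Nat.sub_add_cancel hfin).symm⟩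
    have hc := card_fibre v hv W hW.2
    have hset : ((Finset.univ.filter fun U : Submodule F V => U ≤ T).filter
        fun U => ¬ v ∈ U).filter (fun U => U ⊔ Submodule.span F {v} = W) =
        Finset.univ.filter fun U => v ∉ U ∧ U ⊔ Submodule.span F {v} = W := by
      ext U
      simp only [Finset.mem_filter, Finset.mem_univ, true_and]
      constructor
      · rintro ⟨⟨-, h⟩, h'⟩; exact ⟨h, h'⟩
      · rintro ⟨h, h'⟩; exact ⟨⟨(le_sup_left.trans h'.le).trans hW.1, h⟩, h'⟩
    rw [hset, Finset.sum_congr rfl (g := fun _ => (-1 : ℝ) ^ k * (Fintype.card F : ℝ) ^ k.choose 2)]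
    · rw [Nat.card_eq_fintype_card, Fintype.card_subtype] at hc
      rw [Finset.sum_const, hc, hk, nsmul_eq_mul, Nat.choose_succ_succ' k 1]
      simp only [Nat.choose_one_right, Nat.add_sub_cancel, pow_succ, pow_add]
      push_cast
      ring
    · intro U hU
      simp only [Finset.mem_filter, Finset.mem_univ, true_and] at hU
      have h := Submodule.finrank_sup_add_finrank_inf_eq U (Submodule.span F {v})
      rw [hU.2, disjoint_iff.1 ((Submodule.disjoint_span_singleton' hv).2 hU.1),
        finrank_span_singleton hv, finrank_bot, hk] at h
      have : Module.finrank F U = k := by omega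
      rw [this]
  · intro U hU
    simp only [Finset.mem_filter, Finset.mem_univ, true_and] at hU ⊢
    refine ⟨sup_le hU.1 (by simpa using hvT), ?_⟩
    exact Submodule.mem_sup_right (Submodule.mem_span_singleton_self v)

/-- The expected number of spanning subsets of a random subset of `F^d` (each vector
included independently with probability `p`), i.e. the generating function
`∑ p^{|A|}` over spanning sets `A`, equals
`∑_{k=0}^d (-1)^k g_k(d,q) q^{binom(k,2)} (1+p)^{q^{d-k}}`, where `g_k(d,q)` is the
number of `k`-dimensional subspaces of `F^d`. -/
theorem expected_spanning_subsets (q : ℕ) (hq : IsPrimePow q) (F : Type*) [Field F]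
    [Fintype F] (hF : Fintype.card F = q) (d : ℕ) (p : ℝ) :
    ∑ A ∈ (Finset.univ : Finset (Fin d → F)).powerset.filter
        (fun A : Finset (Fin d → F) => Submodule.span F (A : Set (Fin d → F)) = ⊤),
        p ^ A.card =
      ∑ k ∈ Finset.range (d + 1),
        (-1 : ℝ) ^ k *
          (Nat.card {W : Submodule F (Fin d → F) // Module.finrank F W = k} : ℝ) *
          (q : ℝ) ^ k.choose 2 * (1 + p) ^ q ^ (d - k) := by
  subst hF
  have : Fintype (Submodule F (Fin d → F)) := Fintype.ofFinite _
  let B : LinearMap.BilinForm F (Fin d → F) := dotProductBilin F F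
  have hBa : ∀ x y, B x y = x ⬝ᵥ y := fun x y => rfl
  have hr : B.IsRefl := by
    intro x y h
    rw [hBa] at h ⊢
    rwa [dotProduct_comm]
  have hn : B.Nondegenerate := by
    constructor
    · intro x h
      exact dotProduct_eq_zero x h
    · intro x h
      refine dotProduct_eq_zero x fun y => ?_
      rw [dotProduct_comm]
      exact h y
  have hmem : ∀ (A : Finset (Fin d → F)) (U : Submodule F (Fin d → F)),
      U ≤ B.orthogonal (Submodule.span F (A : Set (Fin d → F))) ↔
        A ⊆ (B.orthogonal U : Set (Fin d → F)).toFinset := by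
    intro A U
    rw [Set.subset_toFinset, ← Submodule.span_le]
    constructor
    · intro h
      exact (LinearMap.BilinForm.le_orthogonal_orthogonal hr).trans
        (LinearMap.BilinForm.orthogonal_le h)
    · intro h
      exact (LinearMap.BilinForm.le_orthogonal_orthogonal hr).trans
        (LinearMap.BilinForm.orthogonal_le h)
  have hbot : ∀ S : Submodule F (Fin d → F), B.orthogonal S = ⊥ ↔ S = ⊤ := by
    intro S
    constructor
    · intro h
      rw [← LinearMap.BilinForm.orthogonal_orthogonal hn hr S, h,
        LinearMap.BilinForm.orthogonal_bot]
    · rintro rfl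
      exact LinearMap.BilinForm.orthogonal_top_eq_bot hn
  have hcard : ∀ U : Submodule F (Fin d → F),
      (B.orthogonal U : Set (Fin d → F)).toFinset.card =
        Fintype.card F ^ (d - Module.finrank F U) := by
    intro U
    have h := Module.natCard_eq_pow_finrank (K := F) (V := B.orthogonal U)
    rw [LinearMap.BilinForm.finrank_orthogonal hn, Module.finrank_fin_fun,
      Nat.card_eq_fintype_card (α := F)] at h
    rw [Set.toFinset_card, ← h, Nat.card_eq_fintype_card]
    rfl
  let w : ℕ → ℝ := fun k => (-1 : ℝ) ^ k * (Fintype.card F : ℝ) ^ k.choose 2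
  have hsub : ∀ s : Finset (Fin d → F), ∑ A ∈ s.powerset, p ^ A.card = (1 + p) ^ s.card := by
    intro s
    have h := Finset.sum_pow_mul_eq_add_pow p 1 s
    simpa [add_comm] using h
  calc _ = ∑ A : Finset (Fin d → F), ∑ U : Submodule F (Fin d → F),
        if A ⊆ (B.orthogonal U : Set (Fin d → F)).toFinset
          then w (Module.finrank F U) * p ^ A.card else 0 := by
        rw [Finset.powerset_univ, Finset.sum_filter]
        refine Finset.sum_congr rfl fun A _ => ?_
        have h := sum_weight (B.orthogonal (Submodule.span F (A : Set (Fin d → F))))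
        simp only [hbot, hmem] at h
        rw [← Finset.sum_filter, ← Finset.sum_mul, h]
        split_ifs <;> simp
    _ = ∑ U : Submodule F (Fin d → F), w (Module.finrank F U) *
          (1 + p) ^ Fintype.card F ^ (d - Module.finrank F U) := by
        rw [Finset.sum_comm]
        refine Finset.sum_congr rfl fun U _ => ?_
        rw [← Finset.sum_filter, ← Finset.mul_sum, ← hcard, ← hsub]
        congr 2
        ext A
        simp
    _ = _ := by
        rw [← Finset.sum_fiberwise_of_maps_to (t := Finset.range (d + 1))
          (g := fun U : Submodule F (Fin d → F) => Module.finrank F U)]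
        · refine Finset.sum_congr rfl fun k _ => ?_
          rw [Finset.sum_congr rfl (g := fun _ => w k * (1 + p) ^ Fintype.card F ^ (d - k))]
          · rw [Finset.sum_const, nsmul_eq_mul, Nat.card_eq_fintype_card, Fintype.card_subtype]
            simp only [w]
            ring
          · intro U hU
            rw [(Finset.mem_filter.1 hU).2]
        · intro U _
          have h := Submodule.finrank_le U
          rw [Module.finrank_fin_fun] at h
          exact Finset.mem_range.2 (by omega)
end
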